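/- arXiv:1304.6607 — 2 statements merged into one kernel-verified Lean document; each statement's English description precedes it below -/
import Mathlib

section
/- Let L ⊆ ℤ^m be a nonzero positive lattice and let E ∈ T_min. Then: (1) there exists no circuit u of Sat(L) such that supp(u⁺) ⊊ E or supp(u⁻) ⊊ E; and (2) there exists a circuit u of Sat(L) such that supp(u⁺) = E or supp(u⁻) = E. -/
open MvPolynomial

variable (K : Type*) [Field K]

/-- The monomial `x^w`. -/
noncomputable def mono {m : ℕ} (w : Fin m → ℕ) : MvPolynomial (Fin m) K :=
  ∏ i, X i ^ w i

/-- The positive part `u⁺` of an integer vector. -/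
def intPos {m : ℕ} (u : Fin m → ℤ) : Fin m → ℕ := fun i => (u i).toNat

/-- The negative part `u⁻` of an integer vector. -/
def intNeg {m : ℕ} (u : Fin m → ℤ) : Fin m → ℕ := fun i => (-u i).toNat

/-- Support of a vector of naturals. -/
def suppN {m : ℕ} (w : Fin m → ℕ) : Set (Fin m) := {i | w i ≠ 0}

/-- Support of a vector of integers. -/
def suppZ {m : ℕ} (u : Fin m → ℤ) : Set (Fin m) := {i | u i ≠ 0}

/-- The lattice ideal `I_L`. -/
noncomputable def latticeIdeal {m : ℕ} (L : AddSubgroup (Fin m → ℤ)) :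
    Ideal (MvPolynomial (Fin m) K) :=
  Ideal.span {f | ∃ u ∈ L, f = mono K (intPos u) - mono K (intNeg u)}

/-- A binomial: a difference of two monomials. -/
def IsBinomial {m : ℕ} (f : MvPolynomial (Fin m) K) : Prop :=
  ∃ u v : Fin m → ℕ, f = mono K u - mono K v

/-- `x^w` is an indispensable monomial of `I_L`: every binomial generating set of `I_L`
contains a binomial one of whose monomials is `x^w`. -/
def IsIndispMonomial {m : ℕ} (L : AddSubgroup (Fin m → ℤ)) (w : Fin m → ℕ) : Prop :=
  ∀ B : Set (MvPolynomial (Fin m) K), (∀ f ∈ B, IsBinomial K f) →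
    Ideal.span B = latticeIdeal K L →
    ∃ f ∈ B, ∃ v : Fin m → ℕ, f = mono K w - mono K v ∨ f = mono K v - mono K w

/-- The set `T` of supports of indispensable monomials of `I_L`. -/
def Tsupp {m : ℕ} (L : AddSubgroup (Fin m → ℤ)) : Set (Set (Fin m)) :=
  {E | ∃ w : Fin m → ℕ, IsIndispMonomial K L w ∧ E = suppN w}

/-- `T_min`, the set of minimal elements of `T` with respect to inclusion. -/
def Tmin {m : ℕ} (L : AddSubgroup (Fin m → ℤ)) : Set (Set (Fin m)) :=
  {E ∈ Tsupp K L | ∀ E' ∈ Tsupp K L, E' ⊆ E → E' = E}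

/-- The saturation `Sat(L)` of the lattice `L`. -/
def satL {m : ℕ} (L : AddSubgroup (Fin m → ℤ)) : Set (Fin m → ℤ) :=
  {u | ∃ d : ℤ, d ≠ 0 ∧ d • u ∈ L}

/-- A circuit of `Sat(L)`: a nonzero element of `Sat(L)` of minimal support
whose coordinates are relatively prime. -/
def IsCircuit {m : ℕ} (L : AddSubgroup (Fin m → ℤ)) (u : Fin m → ℤ) : Prop :=
  u ≠ 0 ∧ u ∈ satL L ∧
    (∀ v ∈ satL L, v ≠ 0 → suppZ v ⊆ suppZ u → suppZ v = suppZ u) ∧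
    Finset.univ.gcd (fun i => (u i).natAbs) = 1

/-!
A monomial `x^w` occurring in a nonzero binomial of `I_L` is the same as a `w` for which some
`v ≠ w` has `w - v ∈ L`. Indispensable monomials are of this kind, and the minimal monomials of
this kind are indispensable. Hence an element of `T_min` is a minimal one among the sets
`supp(u⁺)`, `0 ≠ u ∈ L`. Every nonzero `u ∈ L` admits a circuit `c` with `supp(c⁺) ⊆ supp(u⁺)`: if
`supp(u)` is not minimal, take `0 ≠ v ∈ L` of smaller support and `i` with `|u_i| / |v_i|` minimal;
cancelling the `i`-th coordinate of a positive multiple of `u` against `v` creates no new positive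
coordinate.
-/

section Support

variable {m : ℕ}

theorem mem_suppN_intPos {u : Fin m → ℤ} {i : Fin m} : i ∈ suppN (intPos u) ↔ 0 < u i := by
  simp [suppN, intPos]

theorem intPos_neg (u : Fin m → ℤ) : intPos (-u) = intNeg u := rfl

theorem suppZ_smul {d : ℤ} (hd : d ≠ 0) (u : Fin m → ℤ) : suppZ (d • u) = suppZ u := by
  ext i
  simp [suppZ, hd]

theorem suppN_intPos_smul {d : ℤ} (hd : 0 < d) (u : Fin m → ℤ) :
    suppN (intPos (d • u)) = suppN (intPos u) := by
  ext i
  simp [mem_suppN_intPos, hd]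

theorem suppN_mono {v w : Fin m → ℕ} (h : v ≤ w) : suppN v ⊆ suppN w :=
  fun i hi ↦ ((Nat.pos_of_ne_zero hi).trans_le (h i)).ne'

/-- The inclusion `ℕ^m → ℤ^m`, used to view exponent vectors as integer vectors. -/
def toIntVec : (Fin m → ℕ) →+ (Fin m → ℤ) :=
  (Nat.castAddMonoidHom ℤ).compLeft (Fin m)

theorem toIntVec_apply (w : Fin m → ℕ) (i : Fin m) : toIntVec w i = w i := rfl

theorem toIntVec_injective : Function.Injective (toIntVec (m := m)) :=
  fun _ _ h ↦ funext fun i ↦ Nat.cast_injective (congrFun h i)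

theorem toIntVec_intPos_sub_toIntVec_intNeg (u : Fin m → ℤ) :
    toIntVec (intPos u) - toIntVec (intNeg u) = u := by
  ext i
  exact Int.toNat_sub_toNat_neg (u i)

theorem suppN_intPos_toIntVec_sub_subset (w v : Fin m → ℕ) :
    suppN (intPos (toIntVec w - toIntVec v)) ⊆ suppN w := by
  intro i hi
  rw [mem_suppN_intPos, Pi.sub_apply, toIntVec_apply, toIntVec_apply] at hi
  change w i ≠ 0
  omega

end Support

section LatticeIdeal

variable {m : ℕ}

theorem mono_eq_monomial (w : Fin m → ℕ) :
    mono K w = monomial (Finsupp.equivFunOnFinite.symm w) 1 := by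
  rw [mono, monomial_eq, Finsupp.prod_fintype] <;> simp

theorem mono_add (v w : Fin m → ℕ) : mono K (v + w) = mono K v * mono K w := by
  simp [mono, pow_add, Finset.prod_mul_distrib]

theorem mem_support_mono_sub_mono {a c : Fin m → ℕ} (hac : a ≠ c) {d : Fin m →₀ ℕ} :
    d ∈ (mono K a - mono K c).support ↔ d = Finsupp.equivFunOnFinite.symm a ∨
      d = Finsupp.equivFunOnFinite.symm c := by
  classical
  have hac' := Finsupp.equivFunOnFinite.symm.injective.ne hac
  simp only [mem_support_iff, mono_eq_monomial, coeff_sub, coeff_monomial]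
  grind

/-- The ring homomorphism `K[x] → K[ℤ^m/L]` sending `x^w` to the class of `w`. It serves
to recover lattice membership from membership in `I_L`. -/
noncomputable def latticeGradingHom (L : AddSubgroup (Fin m → ℤ)) :
    MvPolynomial (Fin m) K →+* AddMonoidAlgebra K ((Fin m → ℤ) ⧸ L) :=
  AddMonoidAlgebra.mapDomainRingHom K
    (((QuotientAddGroup.mk' L).comp toIntVec).comp Finsupp.coeFnAddHom)

theorem latticeGradingHom_mono (L : AddSubgroup (Fin m → ℤ)) (w : Fin m → ℕ) :
    latticeGradingHom K L (mono K w) =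
      AddMonoidAlgebra.single (toIntVec w : (Fin m → ℤ) ⧸ L) 1 := by
  rw [mono_eq_monomial]
  exact AddMonoidAlgebra.mapDomain_single

theorem latticeGradingHom_mono_sub_mono_eq_zero_iff (L : AddSubgroup (Fin m → ℤ))
    (p q : Fin m → ℕ) :
    latticeGradingHom K L (mono K p - mono K q) = 0 ↔ toIntVec p - toIntVec q ∈ L := by
  rw [map_sub, latticeGradingHom_mono, latticeGradingHom_mono, sub_eq_zero,
    AddMonoidAlgebra.single_left_inj one_ne_zero, QuotientAddGroup.eq_iff_sub_mem]

theorem latticeIdeal_le_ker_latticeGradingHom (L : AddSubgroup (Fin m → ℤ)) :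
    latticeIdeal K L ≤ RingHom.ker (latticeGradingHom K L) := by
  rw [latticeIdeal, Ideal.span_le]
  rintro _ ⟨u, hu, rfl⟩
  rw [SetLike.mem_coe, RingHom.mem_ker, latticeGradingHom_mono_sub_mono_eq_zero_iff,
    toIntVec_intPos_sub_toIntVec_intNeg]
  exact hu

theorem mono_sub_mono_eq_mul (p q : Fin m → ℕ) :
    mono K p - mono K q = mono K (p ⊓ q) *
      (mono K (intPos (toIntVec p - toIntVec q)) - mono K (intNeg (toIntVec p - toIntVec q))) := by
  rw [mul_sub, ← mono_add, ← mono_add]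
  congr 2 <;> ext i <;>
    simp only [Pi.add_apply, Pi.inf_apply, intPos, intNeg, Pi.sub_apply, toIntVec_apply] <;> omega

theorem mono_sub_mono_mem_latticeIdeal_iff {L : AddSubgroup (Fin m → ℤ)} {p q : Fin m → ℕ} :
    mono K p - mono K q ∈ latticeIdeal K L ↔ toIntVec p - toIntVec q ∈ L := by
  refine ⟨fun h ↦ ?_, fun h ↦ ?_⟩
  · exact (latticeGradingHom_mono_sub_mono_eq_zero_iff K L p q).1
      (latticeIdeal_le_ker_latticeGradingHom K L h)
  · rw [mono_sub_mono_eq_mul]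
    exact Ideal.mul_mem_left _ _ (Ideal.subset_span ⟨_, h, rfl⟩)

end LatticeIdeal

section IndispensableMonomial

theorem exists_mem_support_le_of_mem_span {σ R : Type*} [CommSemiring R]
    {B : Set (MvPolynomial σ R)} {f : MvPolynomial σ R} (hf : f ∈ Ideal.span B)
    {d : σ →₀ ℕ} (hd : d ∈ f.support) : ∃ b ∈ B, ∃ p ∈ b.support, p ≤ d := by
  let S : Set (σ →₀ ℕ) := {p | ∃ b ∈ B, p ∈ b.support}
  have hB : B ⊆ Ideal.span ((fun s ↦ monomial s (1 : R)) '' S) := fun b hb ↦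
    mem_ideal_span_monomial_image.2 fun p hp ↦ ⟨p, ⟨b, hb, hp⟩, le_rfl⟩
  obtain ⟨p, ⟨b, hb, hp⟩, hpd⟩ := mem_ideal_span_monomial_image.1 (Ideal.span_le.2 hB hf) d hd
  exact ⟨b, hb, p, hp, hpd⟩

variable {m : ℕ}

/-- The exponents of the monomials that occur in a nonzero binomial of `I_L`,
described through `L` so that the field does not enter. Its minimal elements are indispensable. -/
def binomialExponents (L : AddSubgroup (Fin m → ℤ)) : Set (Fin m → ℕ) :=
  {w | ∃ v, v ≠ w ∧ toIntVec w - toIntVec v ∈ L}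

variable {L : AddSubgroup (Fin m → ℤ)}

theorem left_mem_binomialExponents {a c : Fin m → ℕ} (hac : a ≠ c)
    (h : toIntVec a - toIntVec c ∈ L) : a ∈ binomialExponents L :=
  ⟨c, hac.symm, h⟩

theorem right_mem_binomialExponents {a c : Fin m → ℕ} (hac : a ≠ c)
    (h : toIntVec a - toIntVec c ∈ L) : c ∈ binomialExponents L :=
  ⟨a, hac, L.sub_mem_comm_iff.1 h⟩

theorem intPos_mem_binomialExponents {u : Fin m → ℤ} (hu : u ∈ L) (hu0 : u ≠ 0) :
    intPos u ∈ binomialExponents L := by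
  have hsub := toIntVec_intPos_sub_toIntVec_intNeg u
  refine left_mem_binomialExponents (c := intNeg u) (fun h ↦ hu0 ?_) (hsub.symm ▸ hu)
  rw [← hsub, h, sub_self]

theorem isIndispMonomial_of_minimal {w : Fin m → ℕ}
    (hw : Minimal (· ∈ binomialExponents L) w) : IsIndispMonomial K L w := by
  intro B hB hspan
  obtain ⟨v, hvw, hv⟩ := hw.prop
  have hmem : mono K w - mono K v ∈ Ideal.span B :=
    hspan ▸ (mono_sub_mono_mem_latticeIdeal_iff K).2 hv
  obtain ⟨b, hb, p, hp, hpw⟩ := exists_mem_support_le_of_mem_span hmem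
    ((mem_support_mono_sub_mono K hvw.symm).2 (Or.inl rfl))
  obtain ⟨a, c, rfl⟩ := hB b hb
  have hac : a ≠ c := by
    rintro rfl
    simp at hp
  have hL : toIntVec a - toIntVec c ∈ L :=
    (mono_sub_mono_mem_latticeIdeal_iff K).1 (hspan ▸ Ideal.subset_span hb)
  rcases (mem_support_mono_sub_mono K hac).1 hp with rfl | rfl
  · obtain rfl := hw.eq_of_le (left_mem_binomialExponents hac hL) hpw
    exact ⟨_, hb, c, Or.inl rfl⟩
  · obtain rfl := hw.eq_of_le (right_mem_binomialExponents hac hL) hpw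
    exact ⟨_, hb, a, Or.inr rfl⟩

theorem IsIndispMonomial.mem_binomialExponents {w : Fin m → ℕ} (hw : IsIndispMonomial K L w) :
    w ∈ binomialExponents L := by
  let S : Set (MvPolynomial (Fin m) K) :=
    {f | ∃ u ∈ L, f = mono K (intPos u) - mono K (intNeg u)}
  have hbinom : ∀ f ∈ S \ {0}, IsBinomial K f := by
    rintro _ ⟨⟨u, -, rfl⟩, -⟩
    exact ⟨_, _, rfl⟩
  obtain ⟨f, ⟨hfS, hf0⟩, v, hfv⟩ := hw (S \ {0}) hbinom Ideal.span_sdiff_singleton_zero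
  have hf : f ∈ latticeIdeal K L := Ideal.subset_span hfS
  have hvw : v ≠ w := by
    rintro rfl
    exact hf0 (by simpa using hfv)
  rcases hfv with rfl | rfl
  · exact left_mem_binomialExponents hvw.symm ((mono_sub_mono_mem_latticeIdeal_iff K).1 hf)
  · exact right_mem_binomialExponents hvw ((mono_sub_mono_mem_latticeIdeal_iff K).1 hf)

theorem suppN_intPos_eq_of_subset_of_mem_Tmin {E : Set (Fin m)} (hE : E ∈ Tmin K L)
    {u : Fin m → ℤ} (hu : u ∈ L) (hu0 : u ≠ 0) (huE : suppN (intPos u) ⊆ E) :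
    suppN (intPos u) = E := by
  obtain ⟨w, hwu, hw⟩ := exists_minimal_le_of_wellFoundedLT (· ∈ binomialExponents L) _
    (intPos_mem_binomialExponents hu hu0)
  have hsub : suppN w ⊆ suppN (intPos u) := suppN_mono hwu
  have hwE : suppN w = E :=
    hE.2 _ ⟨w, isIndispMonomial_of_minimal K hw, rfl⟩ (hsub.trans huE)
  exact huE.antisymm (hwE ▸ hsub)

theorem exists_suppN_intPos_eq_of_mem_Tmin {E : Set (Fin m)} (hE : E ∈ Tmin K L) :
    ∃ u ∈ L, u ≠ 0 ∧ suppN (intPos u) = E := by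
  obtain ⟨w, hw, rfl⟩ := hE.1
  obtain ⟨v, hvw, hv⟩ := hw.mem_binomialExponents
  have h0 : toIntVec w - toIntVec v ≠ 0 := sub_ne_zero.2 (toIntVec_injective.ne hvw.symm)
  exact ⟨_, hv, h0, suppN_intPos_eq_of_subset_of_mem_Tmin K hE hv h0
    (suppN_intPos_toIntVec_sub_subset w v)⟩

end IndispensableMonomial

section Circuit

theorem exists_forall_abs_mul_abs_le {ι : Type*} [Finite ι] (u : ι → ℤ) {v : ι → ℤ}
    (hv : v ≠ 0) : ∃ i, v i ≠ 0 ∧ ∀ j, |u i| * |v j| ≤ |u j| * |v i| := by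
  obtain ⟨i, hi, hmin⟩ := Set.exists_min_image {i | v i ≠ 0} (fun i ↦ (|u i| : ℚ) / |v i|)
    (Set.toFinite _) (Function.ne_iff.1 hv)
  refine ⟨i, hi, fun j ↦ ?_⟩
  rcases eq_or_ne (v j) 0 with hj | hj
  · rw [hj, abs_zero, mul_zero]
    positivity
  · have hij := hmin j hj
    have hi' : v i ≠ 0 := hi
    rw [div_le_div_iff₀ (by positivity) (by positivity)] at hij
    exact_mod_cast hij

theorem exists_pos_smul_eq_gcd_natAbs_eq_one {ι : Type*} [Fintype ι] {u : ι → ℤ} (hu : u ≠ 0) :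
    ∃ g : ℤ, 0 < g ∧ ∃ c : ι → ℤ, Finset.univ.gcd (fun i ↦ (c i).natAbs) = 1 ∧ g • c = u := by
  obtain ⟨k, hk⟩ := Function.ne_iff.1 hu
  obtain ⟨c, hc, hgcd⟩ := Finset.extract_gcd u ⟨k, Finset.mem_univ k⟩
  have hg0 : Finset.univ.gcd u ≠ 0 := fun h ↦ hk (Finset.gcd_eq_zero_iff.1 h k (Finset.mem_univ k))
  have hg : 0 < Finset.univ.gcd u := Finset.Int.finsetGcd_nonneg.lt_of_ne' hg0
  refine ⟨_, hg, c, Nat.dvd_one.1 (Int.natCast_dvd_natCast.1 ?_),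
    funext fun i ↦ (hc i (Finset.mem_univ i)).symm⟩
  rw [Nat.cast_one, ← hgcd]
  exact Finset.dvd_gcd fun i hi ↦ Int.natCast_dvd.2 (Finset.gcd_dvd hi)

variable {m : ℕ} {L : AddSubgroup (Fin m → ℤ)}

theorem exists_pos_smul_mem_of_mem_satL {u : Fin m → ℤ} (hu : u ∈ satL L) :
    ∃ d : ℤ, 0 < d ∧ d • u ∈ L := by
  obtain ⟨d, hd, hdu⟩ := hu
  refine ⟨|d|, abs_pos.2 hd, ?_⟩
  rcases abs_choice d with h | h
  · rwa [h]
  · rw [h, neg_smul]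
    exact L.neg_mem hdu

theorem neg_mem_satL {u : Fin m → ℤ} (hu : u ∈ satL L) : -u ∈ satL L := by
  obtain ⟨d, hd, hdu⟩ := hu
  exact ⟨d, hd, by simpa using hdu⟩

theorem exists_suppN_intPos_subset_suppZ_ssubset {u v : Fin m → ℤ} (hu : u ∈ L) (hv : v ∈ L)
    (hv0 : v ≠ 0) (hvu : suppZ v ⊂ suppZ u) :
    ∃ u' ∈ L, u' ≠ 0 ∧ suppN (intPos u') ⊆ suppN (intPos u) ∧ suppZ u' ⊂ suppZ u := by
  obtain ⟨i, hi, hmin⟩ := exists_forall_abs_mul_abs_le u hv0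
  let u' : Fin m → ℤ := (v i * v i) • u - (u i * v i) • v
  have hu' (j : Fin m) : u' j = v i * v i * u j - u i * v i * v j := rfl
  have hne : u' ≠ 0 := by
    obtain ⟨k, hku, hkv⟩ := Set.exists_of_ssubset hvu
    refine Function.ne_iff.2 ⟨k, ?_⟩
    rw [hu', not_not.1 hkv, mul_zero, sub_zero]
    exact mul_ne_zero (mul_ne_zero hi hi) hku
  have hpos : suppN (intPos u') ⊆ suppN (intPos u) := by
    intro j hj
    rw [mem_suppN_intPos, hu'] at hj
    rw [mem_suppN_intPos]
    by_contra! huj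
    have hbound : -(u i * v i * v j) ≤ v i * v i * -u j := calc
      -(u i * v i * v j) ≤ |u i * v i * v j| := neg_le_abs _
      _ = |v i| * (|u i| * |v j|) := by rw [abs_mul, abs_mul]; ring
      _ ≤ |v i| * (|u j| * |v i|) := mul_le_mul_of_nonneg_left (hmin j) (abs_nonneg _)
      _ = v i * v i * -u j := by rw [abs_of_nonpos huj, ← abs_mul_abs_self (v i)]; ring
    linarith
  have hsub : suppZ u' ⊆ suppZ u := fun j ↦ mt fun huj ↦ by
    have hvj : v j = 0 := not_not.1 fun h ↦ hvu.subset h huj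
    rw [hu', huj, hvj, mul_zero, mul_zero, sub_zero]
  have hcancel : u' i = 0 := by
    rw [hu']
    ring
  exact ⟨u', L.sub_mem (L.zsmul_mem hu _) (L.zsmul_mem hv _), hne, hpos,
    (Set.ssubset_iff_of_subset hsub).2 ⟨i, hvu.subset hi, not_not.2 hcancel⟩⟩

theorem exists_isCircuit_of_minimal_suppZ {u : Fin m → ℤ} (hu : u ∈ L) (hu0 : u ≠ 0)
    (hmin : ∀ v ∈ L, v ≠ 0 → ¬ suppZ v ⊂ suppZ u) :
    ∃ c, IsCircuit L c ∧ suppN (intPos c) = suppN (intPos u) := by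
  obtain ⟨g, hg, c, hgcd, rfl⟩ := exists_pos_smul_eq_gcd_natAbs_eq_one hu0
  refine ⟨c, ⟨(smul_ne_zero_iff.1 hu0).2, ⟨g, hg.ne', hu⟩, fun v hv hv0 hvc ↦ ?_, hgcd⟩,
    (suppN_intPos_smul hg c).symm⟩
  obtain ⟨d, hd, hdv⟩ := exists_pos_smul_mem_of_mem_satL hv
  have hnot := hmin (d • v) hdv (smul_ne_zero hd.ne' hv0)
  rw [suppZ_smul hd.ne', suppZ_smul hg.ne'] at hnot
  exact eq_of_le_of_not_lt hvc hnot

theorem exists_isCircuit_suppN_intPos_subset {u : Fin m → ℤ} (hu : u ∈ L) (hu0 : u ≠ 0) :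
    ∃ c, IsCircuit L c ∧ suppN (intPos c) ⊆ suppN (intPos u) := by
  induction hs : suppZ u using WellFoundedLT.induction generalizing u with
  | ind s ih =>
    subst hs
    by_cases hmin : ∃ v ∈ L, v ≠ 0 ∧ suppZ v ⊂ suppZ u
    · obtain ⟨v, hv, hv0, hvu⟩ := hmin
      obtain ⟨u', hu', hu'0, hpos, hss⟩ := exists_suppN_intPos_subset_suppZ_ssubset hu hv hv0 hvu
      obtain ⟨c, hc, hcu'⟩ := ih _ hss hu' hu'0 rfl
      exact ⟨c, hc, hcu'.trans hpos⟩
    · push Not at hmin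
      obtain ⟨c, hc, hcu⟩ := exists_isCircuit_of_minimal_suppZ hu hu0 hmin
      exact ⟨c, hc, hcu.subset⟩

end Circuit

theorem not_suppN_intPos_ssubset_of_mem_Tmin {m : ℕ} {L : AddSubgroup (Fin m → ℤ)}
    {E : Set (Fin m)} (hE : E ∈ Tmin K L) {u : Fin m → ℤ} (hu : u ∈ satL L) (hu0 : u ≠ 0) :
    ¬ suppN (intPos u) ⊂ E := by
  intro h
  obtain ⟨d, hd, hdu⟩ := exists_pos_smul_mem_of_mem_satL hu
  have hsupp := suppN_intPos_smul hd u
  exact h.ne (hsupp ▸ suppN_intPos_eq_of_subset_of_mem_Tmin K hE hdu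
    (smul_ne_zero hd.ne' hu0) (hsupp ▸ h.subset))

theorem stmt0_general {m : ℕ} (L : AddSubgroup (Fin m → ℤ)) (E : Set (Fin m))
    (hE : E ∈ Tmin K L) :
    (¬ ∃ u : Fin m → ℤ, IsCircuit L u ∧
        (suppN (intPos u) ⊂ E ∨ suppN (intNeg u) ⊂ E)) ∧
    (∃ u : Fin m → ℤ, IsCircuit L u ∧
        (suppN (intPos u) = E ∨ suppN (intNeg u) = E)) := by
  constructor
  · rintro ⟨u, ⟨hu0, hu, -, -⟩, hpos | hneg⟩
    · exact not_suppN_intPos_ssubset_of_mem_Tmin K hE hu hu0 hpos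
    · rw [← intPos_neg] at hneg
      exact not_suppN_intPos_ssubset_of_mem_Tmin K hE (neg_mem_satL hu) (neg_ne_zero.2 hu0) hneg
  · obtain ⟨u, hu, hu0, rfl⟩ := exists_suppN_intPos_eq_of_mem_Tmin K hE
    obtain ⟨c, hc, hcu⟩ := exists_isCircuit_suppN_intPos_subset hu hu0
    refine ⟨c, hc, Or.inl (eq_of_le_of_not_lt hcu ?_)⟩
    exact not_suppN_intPos_ssubset_of_mem_Tmin K hE hc.2.1 hc.1

theorem stmt0 {m : ℕ} (L : AddSubgroup (Fin m → ℤ))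
    (hL0 : L ≠ ⊥) (hLpos : ∀ u ∈ L, (∀ i, 0 ≤ u i) → u = 0)
    (E : Set (Fin m)) (hE : E ∈ Tmin K L) :
    (¬ ∃ u : Fin m → ℤ, IsCircuit L u ∧
        (suppN (intPos u) ⊂ E ∨ suppN (intNeg u) ⊂ E)) ∧
    (∃ u : Fin m → ℤ, IsCircuit L u ∧
        (suppN (intPos u) = E ∨ suppN (intNeg u) = E)) := by
  exact stmt0_general K L E hE
end

section
/- Let n ≥ 3 and let W_{n+1} be the wheel graph. Then the binomial arithmetical rank of the toric ideal I_{A_{W_{n+1}}} equals its minimal number of binomial generators: bar(I_{A_{W_{n+1}}}) = μ(I_{A_{W_{n+1}}}). -/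
open MvPolynomial

/-- The `K`-algebra homomorphism `K[x_e : e ∈ E(G)] → K[t_v : v ∈ V(G)]`
sending `x_e ↦ t_u t_w` for each edge `e = {u,w}`. -/
noncomputable def graphHom (K : Type*) [Field K] {V : Type*} (G : SimpleGraph V) :
    MvPolynomial G.edgeSet K →ₐ[K] MvPolynomial V K :=
  aeval (fun e : G.edgeSet =>
    Sym2.lift ⟨fun u w => X u * X w, fun u w => mul_comm _ _⟩ (e : Sym2 V))

/-- The toric ideal `I_{A_G}` of the graph `G`. -/
noncomputable def toricIdealGraph (K : Type*) [Field K] {V : Type*} (G : SimpleGraph V) :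
    Ideal (MvPolynomial G.edgeSet K) :=
  RingHom.ker (graphHom K G).toRingHom

/-- A binomial: a difference of two (monic) monomials. -/
def IsBinom {K : Type*} [Field K] {σ : Type*} (f : MvPolynomial σ K) : Prop :=
  ∃ u v : σ →₀ ℕ, f = monomial u 1 - monomial v 1

/-- `μ(I)`: the smallest cardinality of a binomial generating set of `I`. -/
noncomputable def muI {K : Type*} [Field K] {σ : Type*} (I : Ideal (MvPolynomial σ K)) : ℕ :=
  sInf {t | ∃ B : Finset (MvPolynomial σ K), B.card = t ∧
        (∀ f ∈ B, IsBinom f) ∧ Ideal.span (B : Set (MvPolynomial σ K)) = I}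

/-- `bar(I)`: the smallest `s` such that there are binomials `B_1,…,B_s ∈ I`
with `rad(I) = rad((B_1,…,B_s))`. -/
noncomputable def barI {K : Type*} [Field K] {σ : Type*} (I : Ideal (MvPolynomial σ K)) : ℕ :=
  sInf {s | ∃ B : Fin s → MvPolynomial σ K,
        (∀ j, IsBinom (B j) ∧ B j ∈ I) ∧
        I.radical = (Ideal.span (Set.range B)).radical}

/-- The wheel graph `W_{n+1}` on the vertex set `{0,…,n}`: the cycle
`0 — 1 — ⋯ — (n-1) — 0` together with the hub `n` joined to every cycle vertex. -/
def wheelGraph (n : ℕ) : SimpleGraph (Fin (n + 1)) :=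
  SimpleGraph.fromRel (fun a b =>
    (a.val < n ∧ b.val < n ∧ (a.val + 1) % n = b.val) ∨ (a.val < n ∧ b.val = n))

/-!
Evaluating at the indicator of a set of variables shows that every minimal nonface of the congruence
of a toric ideal `I` is the support of a monomial of one of the binomials, whenever these generate
`I` up to radical. Since a binomial has two monomials, there are at most `2 * bar(I)` minimal
nonfaces.

The toric ideal of a wheel is generated by a quadric for each rim edge, a cubic for each pair of rim
edges that are far from each other, and, for an even rim, the binomial of the rim. If the wheel has
more than three spokes, the supports of the two sides of these binomials are distinct minimal
nonfaces, so no fewer binomials can suffice. With three spokes the quadrics are the differences of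
three monomials, so two of them generate the ideal, and a single binomial does not suffice since
there are three minimal nonfaces.
-/

section MonomialCongruence

variable {σ R : Type*} [CommRing R]

/-- The congruence on exponent vectors induced by an ideal: `u` and `v` are related when the
binomial `x^u - x^v` lies in the ideal. -/
def monomialCon (I : Ideal (MvPolynomial σ R)) : AddCon (σ →₀ ℕ) where
  r u v := (monomial u 1 - monomial v 1 : MvPolynomial σ R) ∈ I
  iseqv :=
    { refl := fun u => by simp
      symm := fun h => by simpa using I.neg_mem h
      trans := fun h h' => by simpa using I.add_mem h h' }
  add' {u v u' v'} h h' := by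
    have key : (monomial (u + u') 1 - monomial (v + v') 1 : MvPolynomial σ R) =
        monomial u' 1 * (monomial u 1 - monomial v 1) +
          monomial v 1 * (monomial u' 1 - monomial v' 1) := by
      simp only [mul_sub, monomial_mul, one_mul, add_comm u u', add_comm v u']
      abel
    exact key ▸ I.add_mem (I.mul_mem_left _ h) (I.mul_mem_left _ h')

lemma monomialCon_iff {I : Ideal (MvPolynomial σ R)} {u v : σ →₀ ℕ} :
    monomialCon I u v ↔ (monomial u 1 - monomial v 1 : MvPolynomial σ R) ∈ I :=
  Iff.rfl

lemma monomialCon_mono {I J : Ideal (MvPolynomial σ R)} (h : I ≤ J) :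
    monomialCon I ≤ monomialCon J :=
  fun _ _ huv => h huv

lemma mem_of_map_eq_zero_of_map_monomial {τ : Type*}
    (φ : MvPolynomial σ R →ₗ[R] MvPolynomial τ R) (d : (σ →₀ ℕ) → τ →₀ ℕ)
    (hφ : ∀ u, φ (monomial u 1) = monomial (d u) 1) {J : Ideal (MvPolynomial σ R)}
    (hJ : ∀ u v, d u = d v → monomialCon J u v) {f : MvPolynomial σ R} (hf : φ f = 0) :
    f ∈ J := by
  let ψ : MvPolynomial τ R →ₗ[R] MvPolynomial σ R :=
    (basisMonomials τ R).constr R fun t => monomial (Function.invFun d t) 1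
  have hψ (t : τ →₀ ℕ) : ψ (monomial t 1) = monomial (Function.invFun d t) 1 := by
    simpa [ψ] using (basisMonomials τ R).constr_basis R
      (fun t => (monomial (Function.invFun d t) 1 : MvPolynomial σ R)) t
  have sub_mem (f : MvPolynomial σ R) : f - ψ (φ f) ∈ J := by
    induction f using MvPolynomial.induction_on' with
    | monomial u a =>
      have hu : monomial u a = a • (monomial u 1 : MvPolynomial σ R) := by simp [smul_monomial]
      rw [hu, map_smul, map_smul, ← smul_sub, hφ, hψ, smul_eq_C_mul]
      exact J.mul_mem_left _ (hJ _ _ (Function.invFun_eq ⟨u, rfl⟩).symm)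
    | add p q hp hq =>
      rw [map_add, map_add, add_sub_add_comm]
      exact J.add_mem hp hq
  simpa [hf] using sub_mem f

end MonomialCongruence

section Face

variable {σ : Type*}

/-- A set of variables is a face of a congruence on exponent vectors when no vector supported on it
is related to one that is not. For the congruence of a toric ideal these are the faces of the
underlying affine semigroup. -/
def IsFace (c : AddCon (σ →₀ ℕ)) (F : Set σ) : Prop :=
  ∀ ⦃u v⦄, c u v → ↑u.support ⊆ F → (↑v.support : Set σ) ⊆ F

lemma minimal_not_isFace {c : AddCon (σ →₀ ℕ)} {E : Set σ} (hE : ¬IsFace c E)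
    (hdiff : ∀ e ∈ E, IsFace c (E \ {e})) : Minimal (fun F => ¬IsFace c F) E := by
  refine ⟨hE, fun F hF hFE e he => ?_⟩
  by_contra heF
  refine hF fun u v huv hu => ?_
  have avoid (a : σ) (ha : a ∈ E) (haF : a ∉ F) : ↑v.support ⊆ E \ {a} :=
    hdiff a ha huv fun x hx => ⟨hFE (hu hx), fun hxa => haF (hxa ▸ hu hx)⟩
  intro x hx
  by_contra hxF
  exact (avoid x (avoid e he heF hx).1 hxF hx).2 rfl

lemma support_eq_of_minimal_not_isFace {c : AddCon (σ →₀ ℕ)} {E : Set σ}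
    (hE : Minimal (fun F => ¬IsFace c F) E) {u v : σ →₀ ℕ} (huv : c u v)
    (hu : ↑u.support ⊆ E) (hv : ¬↑v.support ⊆ E) : ↑u.support = E :=
  hu.antisymm (hE.2 (fun hface => hv ((hface huv subset_rfl).trans hu)) hu)

/-- The exponent vector of the squarefree monomial `∏ e ∈ s, x_e`. -/
noncomputable def squarefreeExp (s : Finset σ) : σ →₀ ℕ :=
  Finsupp.indicator s fun _ _ => 1

lemma squarefreeExp_apply_of_mem {s : Finset σ} {e : σ} (he : e ∈ s) : squarefreeExp s e = 1 :=
  Finsupp.indicator_of_mem he _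

lemma support_squarefreeExp (s : Finset σ) : (squarefreeExp s).support = s := by
  classical
  ext e
  simp [squarefreeExp, Finsupp.indicator_apply]

lemma squarefreeExp_le {s : Finset σ} {u : σ →₀ ℕ} (hs : s ⊆ u.support) :
    squarefreeExp s ≤ u := by
  classical
  intro e
  rw [squarefreeExp, Finsupp.indicator_apply]
  split_ifs with he
  · exact Nat.one_le_iff_ne_zero.2 (Finsupp.mem_support_iff.1 (hs he))
  · exact Nat.zero_le _

lemma weight_squarefreeExp {M : Type*} [AddCommMonoid M] (w : σ → M) (s : Finset σ) :
    Finsupp.weight w (squarefreeExp s) = ∑ e ∈ s, w e := by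
  rw [Finsupp.weight_apply, Finsupp.sum, support_squarefreeExp]
  exact Finset.sum_congr rfl fun e he => by rw [squarefreeExp_apply_of_mem he, one_smul]

lemma not_isFace_of_squarefreeExp {c : AddCon (σ →₀ ℕ)} {s t : Finset σ}
    (h : c (squarefreeExp s) (squarefreeExp t)) (hts : ¬t ⊆ s) : ¬IsFace c (s : Set σ) := by
  intro hface
  have := hface h
  rw [support_squarefreeExp, support_squarefreeExp] at this
  exact hts (Finset.coe_subset.1 (this subset_rfl))

end Face

section BinomialArithmeticalRank

variable {σ : Type*} {K : Type*} [Field K]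

open Classical in
lemma eval_indicator_one_monomial {R : Type*} [CommSemiring R] (F : Set σ) (u : σ →₀ ℕ) :
    eval (F.indicator 1) (monomial u (1 : R)) = if ↑u.support ⊆ F then 1 else 0 := by
  rw [eval_monomial, one_mul, Finsupp.prod]
  split_ifs with hu
  · exact Finset.prod_eq_one fun e he => by simp [Set.indicator_of_mem (hu he)]
  · obtain ⟨e, he, heF⟩ := Set.not_subset.1 hu
    refine Finset.prod_eq_zero he ?_
    rw [Set.indicator_of_notMem heF, zero_pow (Finsupp.mem_support_iff.1 he)]

-- Otherwise the point with coordinates `1` on `F` and `0` off `F` would be a zero of the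
-- generating binomials but not of `I`.
lemma isFace_of_radical_eq {R ι : Type*} [CommRing R] [IsDomain R] {I : Ideal (MvPolynomial σ R)}
    {p q : ι → σ →₀ ℕ}
    (hrad : I.radical = (Ideal.span (Set.range fun j =>
      (monomial (p j) 1 - monomial (q j) 1 : MvPolynomial σ R))).radical)
    {F : Set σ} (hF : ∀ j, (↑(p j).support : Set σ) ⊆ F ↔ ↑(q j).support ⊆ F) :
    IsFace (monomialCon I) F := by
  classical
  let φ : MvPolynomial σ R →+* R := eval (F.indicator 1)
  have span_le : Ideal.span (Set.range fun j =>
      (monomial (p j) 1 - monomial (q j) 1 : MvPolynomial σ R)) ≤ RingHom.ker φ := by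
    rw [Ideal.span_le]
    rintro _ ⟨j, rfl⟩
    rw [SetLike.mem_coe, RingHom.mem_ker, map_sub, eval_indicator_one_monomial,
      eval_indicator_one_monomial, if_congr (hF j) rfl rfl, sub_self]
  have le_ker : I ≤ RingHom.ker φ :=
    Ideal.le_radical.trans <|
      hrad.trans_le ((RingHom.ker_isPrime φ).isRadical.radical_le_iff.2 span_le)
  intro u v huv hu
  by_contra hv
  have eval_eq_zero := RingHom.mem_ker.1 (le_ker huv)
  simp [φ, eval_indicator_one_monomial, hu, hv] at eval_eq_zero

theorem card_le_two_mul_of_radical_eq {ι κ : Type*} [Fintype ι] [Fintype κ]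
    {I : Ideal (MvPolynomial σ K)} {B : ι → MvPolynomial σ K} (hB : ∀ j, IsBinom (B j) ∧ B j ∈ I)
    (hrad : I.radical = (Ideal.span (Set.range B)).radical)
    {E : κ → Set σ} (hinj : Function.Injective E)
    (hE : ∀ k, Minimal (fun F => ¬IsFace (monomialCon I) F) (E k)) :
    Fintype.card κ ≤ 2 * Fintype.card ι := by
  choose p q hpq using fun j => (hB j).1
  have hcon (j : ι) : monomialCon I (p j) (q j) := monomialCon_iff.2 (hpq j ▸ (hB j).2)
  obtain rfl : B = fun j => monomial (p j) 1 - monomial (q j) 1 := funext hpq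
  have exists_side (k : κ) : ∃ x : ι ⊕ ι, ↑(Sum.elim p q x).support = E k := by
    obtain ⟨j, hj⟩ := not_forall.1 (mt (isFace_of_radical_eq hrad) (hE k).1)
    by_cases hp : ↑(p j).support ⊆ E k
    · have hq : ¬↑(q j).support ⊆ E k := by tauto
      exact ⟨.inl j, support_eq_of_minimal_not_isFace (hE k) (hcon j) hp hq⟩
    · have hq : ↑(q j).support ⊆ E k := by tauto
      exact ⟨.inr j, support_eq_of_minimal_not_isFace (hE k) ((monomialCon I).symm (hcon j)) hq hp⟩
  choose side hside using exists_side
  have side_injective : Function.Injective side := fun k k' h =>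
    hinj (by rw [← hside k, ← hside k', h])
  simpa [two_mul] using Fintype.card_le_of_injective side side_injective

lemma exists_finset_card_eq_muI {ι : Type*} [Fintype ι] {I : Ideal (MvPolynomial σ K)}
    {g : ι → MvPolynomial σ K} (hg : ∀ i, IsBinom (g i)) (hspan : Ideal.span (Set.range g) = I) :
    muI I ≤ Fintype.card ι ∧ ∃ B : Finset (MvPolynomial σ K), B.card = muI I ∧
      (∀ f ∈ B, IsBinom f) ∧ Ideal.span (B : Set (MvPolynomial σ K)) = I := by
  classical
  have hmem : (Finset.univ.image g).card ∈ {t | ∃ B : Finset (MvPolynomial σ K), B.card = t ∧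
      (∀ f ∈ B, IsBinom f) ∧ Ideal.span (B : Set (MvPolynomial σ K)) = I} :=
    ⟨_, rfl, by simpa using hg, by simpa using hspan⟩
  exact ⟨(Nat.sInf_le hmem).trans Finset.card_image_le, Nat.sInf_mem ⟨_, hmem⟩⟩

lemma exists_family_card_eq_barI {I : Ideal (MvPolynomial σ K)} {B : Finset (MvPolynomial σ K)}
    (hB : ∀ f ∈ B, IsBinom f) (hspan : Ideal.span (B : Set (MvPolynomial σ K)) = I) :
    barI I ≤ B.card ∧ ∃ B' : Fin (barI I) → MvPolynomial σ K,
      (∀ j, IsBinom (B' j) ∧ B' j ∈ I) ∧ I.radical = (Ideal.span (Set.range B')).radical := by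
  have hmem : B.card ∈ {s | ∃ B' : Fin s → MvPolynomial σ K,
      (∀ j, IsBinom (B' j) ∧ B' j ∈ I) ∧ I.radical = (Ideal.span (Set.range B')).radical} := by
    refine ⟨fun j => B.equivFin.symm j, fun j => ?_, ?_⟩
    · have hj := (B.equivFin.symm j).2
      exact ⟨hB _ hj, hspan ▸ Ideal.subset_span hj⟩
    · have hrange : Set.range (fun j => (B.equivFin.symm j : MvPolynomial σ K)) = B := by
        rw [← Function.comp_def, B.equivFin.symm.surjective.range_comp]
        exact Subtype.range_coe
      rw [hrange, hspan]
  exact ⟨Nat.sInf_le hmem, Nat.sInf_mem ⟨_, hmem⟩⟩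

theorem barI_eq_muI_of_card_le {ι κ : Type*} [Fintype ι] [Fintype κ]
    {I : Ideal (MvPolynomial σ K)} {g : ι → MvPolynomial σ K} (hg : ∀ i, IsBinom (g i))
    (hspan : Ideal.span (Set.range g) = I) {E : κ → Set σ} (hinj : Function.Injective E)
    (hE : ∀ k, Minimal (fun F => ¬IsFace (monomialCon I) F) (E k))
    (hcard : 2 * Fintype.card ι ≤ Fintype.card κ + 1) : barI I = muI I := by
  obtain ⟨muI_le, B, hBcard, hB, hBspan⟩ := exists_finset_card_eq_muI hg hspan
  obtain ⟨barI_le, B', hB', hrad⟩ := exists_family_card_eq_barI hB hBspan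
  have card_le := card_le_two_mul_of_radical_eq hB' hrad hinj hE
  rw [Fintype.card_fin] at card_le
  omega

end BinomialArithmeticalRank

section Separated

variable {σ : Type*} {c : AddCon (σ →₀ ℕ)} {u v : σ →₀ ℕ}

/-- Two exponent vectors are separated when no representatives of their classes share a variable:
no cancellation of a common variable can shorten a relation between them. -/
def Separated (c : AddCon (σ →₀ ℕ)) (u v : σ →₀ ℕ) : Prop :=
  ∀ ⦃u' v'⦄, c u u' → c v v' → Disjoint u'.support v'.support

lemma Separated.symm (h : Separated c u v) : Separated c v u :=
  fun _ _ hv hu => (h hu hv).symm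

lemma Separated.eq_zero_of_con (h : Separated c u v) {s t : Finset σ}
    (hst : c (squarefreeExp s) (squarefreeExp t)) (hs : s ⊆ u.support) {e : σ} (he : e ∈ t) :
    v e = 0 := by
  have move : c u (u - squarefreeExp s + squarefreeExp t) := by
    simpa only [tsub_add_cancel_of_le (squarefreeExp_le hs)] using
      c.add (c.refl (u - squarefreeExp s)) hst
  refine Finsupp.notMem_support_iff.1 (Finset.disjoint_left.1 (h move (c.refl v)) ?_)
  simp [squarefreeExp_apply_of_mem he]

lemma Separated.eq_zero (h : Separated c u v) {e : σ} (he : u e ≠ 0) : v e = 0 :=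
  h.eq_zero_of_con (c.refl _) (by simpa using he) (Finset.mem_singleton_self e)

/-- Induction on the degree, cancelling a common variable of two representatives. -/
theorem ker_le_of_forall_separated {M : Type*} [AddCommMonoid M] [IsCancelAdd M]
    {φ : (σ →₀ ℕ) →+ M} (hdeg : ∀ u v, φ u = φ v → u.degree = v.degree)
    (hc : c ≤ AddCon.ker φ) (hsep : ∀ u v, φ u = φ v → Separated c u v → u = 0) :
    AddCon.ker φ ≤ c := by
  suffices ∀ N u v, u.degree = N → φ u = φ v → c u v from fun u v => this _ u v rfl
  intro N
  induction N using Nat.strong_induction_on with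
  | _ N ih =>
    rintro u v rfl huv
    by_cases hsepuv : Separated c u v
    · obtain rfl := hsep u v huv hsepuv
      have hv : v = 0 :=
        (Finsupp.degree_eq_zero_iff v).1 (by rw [← hdeg _ _ huv, map_zero])
      exact hv ▸ c.refl 0
    · simp only [Separated, not_forall, Finset.not_disjoint_iff] at hsepuv
      obtain ⟨u', v', hu, hv, e, heu, hev⟩ := hsepuv
      have split (w : σ →₀ ℕ) (hw : e ∈ w.support) :
          w - Finsupp.single e 1 + Finsupp.single e 1 = w :=
        tsub_add_cancel_of_le
          (Finsupp.single_le_iff.2 (Nat.one_le_iff_ne_zero.2 (Finsupp.mem_support_iff.1 hw)))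
      have hφ : φ (u' - Finsupp.single e 1) = φ (v' - Finsupp.single e 1) := by
        refine add_right_cancel (b := φ (Finsupp.single e 1)) ?_
        rw [← map_add, ← map_add, split u' heu, split v' hev, ← hc hu, ← hc hv, huv]
      have hlt : (u' - Finsupp.single e 1).degree < u.degree := by
        rw [hdeg _ _ (hc hu), ← split u' heu]
        simp
      have := c.add (ih _ hlt _ _ rfl hφ) (c.refl (Finsupp.single e 1))
      rw [split u' heu, split v' hev] at this
      exact c.trans hu (c.trans this (c.symm hv))

end Separated

section ToricIdeal

variable {V : Type*} {G : SimpleGraph V}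

/-- The exponent vector of `t_u t_w`, for an edge `{u, w}`. -/
noncomputable def endpointExp : Sym2 V → V →₀ ℕ :=
  Sym2.lift ⟨fun u w => Finsupp.single u 1 + Finsupp.single w 1, fun _ _ => add_comm _ _⟩

@[simp]
lemma endpointExp_mk (u w : V) :
    endpointExp s(u, w) = Finsupp.single u 1 + Finsupp.single w 1 :=
  rfl

lemma degree_endpointExp (e : Sym2 V) : (endpointExp e).degree = 2 := by
  induction e with
  | _ u w => simp

lemma endpointExp_apply_eq_zero_iff {e : Sym2 V} {a : V} : endpointExp e a = 0 ↔ a ∉ e := by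
  induction e with
  | _ u w => simp [Finsupp.single_apply_eq_zero]

variable (G) in
/-- The vertex multidegree of a monomial in the edge variables: the map on exponent vectors
underlying `graphHom`. -/
noncomputable def multidegree : (G.edgeSet →₀ ℕ) →+ (V →₀ ℕ) :=
  Finsupp.weight fun e : G.edgeSet => endpointExp (e : Sym2 V)

lemma multidegree_apply (u : G.edgeSet →₀ ℕ) :
    multidegree G u = ∑ e ∈ u.support, u e • endpointExp (e : Sym2 V) :=
  Finsupp.weight_apply _ _

lemma multidegree_single (e : G.edgeSet) (k : ℕ) :
    multidegree G (Finsupp.single e k) = k • endpointExp e :=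
  Finsupp.weight_single _ _ _

lemma multidegree_squarefreeExp (s : Finset G.edgeSet) :
    multidegree G (squarefreeExp s) = ∑ e ∈ s, endpointExp e :=
  weight_squarefreeExp _ _

lemma degree_multidegree (u : G.edgeSet →₀ ℕ) : (multidegree G u).degree = 2 * u.degree := by
  induction u using Finsupp.induction_linear with
  | zero => simp
  | add u v hu hv => rw [map_add, map_add, map_add, hu, hv, mul_add]
  | single e k => simp [multidegree_single, degree_endpointExp, mul_comm]

lemma degree_eq_of_multidegree_eq {u v : G.edgeSet →₀ ℕ} (h : multidegree G u = multidegree G v) :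
    u.degree = v.degree := by
  have := congrArg Finsupp.degree h
  rw [degree_multidegree, degree_multidegree] at this
  omega

lemma graphHom_X (K : Type*) [Field K] (e : G.edgeSet) :
    graphHom K G (X e) = monomial (endpointExp e) 1 := by
  obtain ⟨e, he⟩ := e
  induction e with
  | _ u w =>
    rw [graphHom, aeval_X]
    simp [X, monomial_mul]

lemma graphHom_monomial (K : Type*) [Field K] (u : G.edgeSet →₀ ℕ) :
    graphHom K G (monomial u 1) = monomial (multidegree G u) 1 := by
  induction u using Finsupp.induction_linear with
  | zero => simp
  | add u v hu hv =>
    have split : (monomial (u + v) 1 : MvPolynomial G.edgeSet K) = monomial u 1 * monomial v 1 := by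
      rw [monomial_mul, one_mul]
    rw [split, map_mul, hu, hv, map_add, monomial_mul, one_mul]
  | single e k =>
    rw [← X_pow_eq_monomial, map_pow, graphHom_X, multidegree_single, monomial_pow, one_pow]

lemma monomialCon_toricIdealGraph (K : Type*) [Field K] (G : SimpleGraph V) :
    monomialCon (toricIdealGraph K G) = AddCon.ker (multidegree G) := by
  ext u v
  change graphHom K G (monomial u 1 - monomial v 1) = 0 ↔ multidegree G u = multidegree G v
  rw [map_sub, graphHom_monomial, graphHom_monomial, sub_eq_zero]
  exact (monomial_left_injective one_ne_zero).eq_iff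

theorem span_eq_toricIdealGraph (K : Type*) [Field K] {ι : Type*} {a b : ι → G.edgeSet →₀ ℕ}
    (hab : ∀ i, multidegree G (a i) = multidegree G (b i))
    (hker : ∀ c : AddCon (G.edgeSet →₀ ℕ), c ≤ AddCon.ker (multidegree G) →
      (∀ i, c (a i) (b i)) → AddCon.ker (multidegree G) ≤ c) :
    Ideal.span (Set.range fun i => (monomial (a i) 1 - monomial (b i) 1 : MvPolynomial _ K)) =
      toricIdealGraph K G := by
  set J := Ideal.span (Set.range fun i => (monomial (a i) 1 - monomial (b i) 1 :
    MvPolynomial G.edgeSet K))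
  have le : J ≤ toricIdealGraph K G := by
    rw [Ideal.span_le]
    rintro _ ⟨i, rfl⟩
    have := hab i
    rw [← AddCon.ker_rel, ← monomialCon_toricIdealGraph K] at this
    exact this
  have ker_le : AddCon.ker (multidegree G) ≤ monomialCon J :=
    hker _ (monomialCon_toricIdealGraph K G ▸ monomialCon_mono le)
      fun i => Ideal.subset_span ⟨i, rfl⟩
  exact le.antisymm fun f hf => mem_of_map_eq_zero_of_map_monomial (graphHom K G).toLinearMap
    (multidegree G) (graphHom_monomial K) (fun _ _ huv => ker_le huv) hf

lemma multidegree_apply_ne_zero_iff {u : G.edgeSet →₀ ℕ} {a : V} :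
    multidegree G u a ≠ 0 ↔ ∃ e, u e ≠ 0 ∧ a ∈ (e : Sym2 V) := by
  simp only [multidegree_apply, Finsupp.finsetSum_apply, Finsupp.smul_apply, smul_eq_mul, Ne,
    Finset.sum_eq_zero_iff, mul_eq_zero, endpointExp_apply_eq_zero_iff, Finsupp.mem_support_iff]
  grind

lemma exists_mem_edge_of_multidegree_eq {u v : G.edgeSet →₀ ℕ}
    (h : multidegree G u = multidegree G v) {e : G.edgeSet} (he : u e ≠ 0) {a : V}
    (ha : a ∈ (e : Sym2 V)) : ∃ e', v e' ≠ 0 ∧ a ∈ (e' : Sym2 V) := by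
  rw [← multidegree_apply_ne_zero_iff, ← h]
  exact multidegree_apply_ne_zero_iff.2 ⟨e, he, ha⟩

theorem isFace_of_vertexWeight {c : V → ℤ}
    (hc : ∀ e : G.edgeSet, 0 ≤ Finsupp.weight c (endpointExp (e : Sym2 V))) :
    IsFace (AddCon.ker (multidegree G))
      {e | Finsupp.weight c (endpointExp (e : Sym2 V)) = 0} := by
  have weight_multidegree (u : G.edgeSet →₀ ℕ) : Finsupp.weight c (multidegree G u) =
      ∑ e ∈ u.support, u e • Finsupp.weight c (endpointExp (e : Sym2 V)) := by
    rw [multidegree_apply, map_sum]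
    simp only [map_nsmul]
  have support_subset_iff (u : G.edgeSet →₀ ℕ) :
      (↑u.support : Set G.edgeSet) ⊆ {e | Finsupp.weight c (endpointExp (e : Sym2 V)) = 0} ↔
        Finsupp.weight c (multidegree G u) = 0 := by
    rw [weight_multidegree, Finset.sum_eq_zero_iff_of_nonneg fun e _ => nsmul_nonneg (hc e) _]
    refine forall₂_congr fun e he => ?_
    simp [Finsupp.mem_support_iff.1 he]
  intro u v huv hu
  rw [support_subset_iff] at hu ⊢
  rwa [← (huv : multidegree G u = multidegree G v)]

end ToricIdeal

section Wheel

variable {n : ℕ}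

lemma natCast_zmod_ne_zero {k : ℕ} (hk : k ≠ 0) (hkn : k < n + 3) : (k : ZMod (n + 3)) ≠ 0 := by
  rw [Ne, ZMod.natCast_eq_zero_iff]
  exact Nat.not_dvd_of_pos_of_lt (Nat.pos_of_ne_zero hk) hkn

lemma one_zmod_ne_zero : (1 : ZMod (n + 3)) ≠ 0 :=
  mod_cast natCast_zmod_ne_zero (n := n) (k := 1) (by omega) (by omega)

lemma two_zmod_ne_zero : (2 : ZMod (n + 3)) ≠ 0 :=
  mod_cast natCast_zmod_ne_zero (n := n) (k := 2) (by omega) (by omega)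

lemma three_zmod_ne_zero (hn : n ≠ 0) : (3 : ZMod (n + 3)) ≠ 0 :=
  mod_cast natCast_zmod_ne_zero (n := n) (k := 3) (by omega) (by omega)

lemma val_add_one_zmod (i : ZMod (n + 3)) : (i + 1).val = (i.val + 1) % (n + 3) := by
  rw [← ZMod.val_natCast, Nat.cast_add, Nat.cast_one, ZMod.natCast_zmod_val]

/-- The vertices of the cycle of the wheel, indexed cyclically. -/
def rimVertex (i : ZMod (n + 3)) : Fin (n + 3 + 1) :=
  ⟨i.val, (ZMod.val_lt i).trans (Nat.lt_succ_self _)⟩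

lemma val_rimVertex (i : ZMod (n + 3)) : (rimVertex i).val = i.val :=
  rfl

lemma rimVertex_injective : Function.Injective (rimVertex (n := n)) := fun _ _ h =>
  ZMod.val_injective _ (Fin.mk.inj h)

@[simp]
lemma rimVertex_inj {i j : ZMod (n + 3)} : rimVertex i = rimVertex j ↔ i = j :=
  rimVertex_injective.eq_iff

@[simp]
lemma rimVertex_ne_last (i : ZMod (n + 3)) : rimVertex i ≠ Fin.last (n + 3) :=
  Fin.ne_of_lt (ZMod.val_lt i)

lemma rimVertex_ne_add_one (i : ZMod (n + 3)) : rimVertex i ≠ rimVertex (i + 1) := by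
  simpa using one_zmod_ne_zero

lemma exists_rimVertex_eq {a : Fin (n + 3 + 1)} (ha : a.val < n + 3) :
    ∃ i : ZMod (n + 3), rimVertex i = a :=
  ⟨(a.val : ZMod (n + 3)), Fin.ext (ZMod.val_cast_of_lt ha)⟩

/-- The edge of the cycle of the wheel from the `i`-th to the `(i + 1)`-st cycle vertex. -/
def rimEdge (i : ZMod (n + 3)) : (wheelGraph (n + 3)).edgeSet :=
  ⟨s(rimVertex i, rimVertex (i + 1)), rimVertex_ne_add_one i,
    .inl (.inl ⟨ZMod.val_lt i, ZMod.val_lt (i + 1), (val_add_one_zmod i).symm⟩)⟩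

/-- The edge joining the `i`-th cycle vertex to the hub of the wheel. -/
def spoke (i : ZMod (n + 3)) : (wheelGraph (n + 3)).edgeSet :=
  ⟨s(rimVertex i, Fin.last (n + 3)), rimVertex_ne_last i, .inl (.inr ⟨ZMod.val_lt i, rfl⟩)⟩

lemma coe_rimEdge (i : ZMod (n + 3)) :
    (rimEdge i : Sym2 (Fin (n + 3 + 1))) = s(rimVertex i, rimVertex (i + 1)) :=
  rfl

lemma coe_spoke (i : ZMod (n + 3)) :
    (spoke i : Sym2 (Fin (n + 3 + 1))) = s(rimVertex i, Fin.last (n + 3)) :=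
  rfl

lemma rimEdge_injective : Function.Injective (rimEdge (n := n)) := by
  intro i j h
  have := congrArg Subtype.val h
  simp only [coe_rimEdge, Sym2.eq_iff, rimVertex_inj] at this
  grind [two_zmod_ne_zero (n := n)]

@[simp]
lemma rimEdge_inj {i j : ZMod (n + 3)} : rimEdge i = rimEdge j ↔ i = j :=
  rimEdge_injective.eq_iff

@[simp]
lemma spoke_inj {i j : ZMod (n + 3)} : spoke i = spoke j ↔ i = j := by
  simp [Subtype.ext_iff, coe_spoke]

@[simp]
lemma rimEdge_ne_spoke (i j : ZMod (n + 3)) : rimEdge i ≠ spoke j := by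
  simp [Ne, Subtype.ext_iff, coe_spoke, coe_rimEdge]

@[simp]
lemma spoke_ne_rimEdge (i j : ZMod (n + 3)) : spoke i ≠ rimEdge j :=
  (rimEdge_ne_spoke j i).symm

lemma exists_eq_spoke_or_rimEdge (e : (wheelGraph (n + 3)).edgeSet) :
    (∃ i, e = spoke i) ∨ ∃ i, e = rimEdge i := by
  obtain ⟨e, he⟩ := e
  have of_rel {a b : Fin (n + 3 + 1)} (hab : (a.val < n + 3 ∧ b.val < n + 3 ∧
      (a.val + 1) % (n + 3) = b.val) ∨ (a.val < n + 3 ∧ b.val = n + 3)) :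
      (∃ i : ZMod (n + 3), s(a, b) = (spoke i : Sym2 (Fin (n + 3 + 1)))) ∨
        ∃ i : ZMod (n + 3), s(a, b) = (rimEdge i : Sym2 (Fin (n + 3 + 1))) := by
    obtain ⟨ha, -, hb⟩ | ⟨ha, hb⟩ := hab <;> obtain ⟨i, rfl⟩ := exists_rimVertex_eq ha
    · obtain rfl : b = rimVertex (i + 1) := by
        rw [Fin.ext_iff, ← hb, val_rimVertex, val_rimVertex, val_add_one_zmod]
      exact .inr ⟨i, rfl⟩
    · obtain rfl : b = Fin.last (n + 3) := Fin.ext hb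
      exact .inl ⟨i, rfl⟩
  simp only [Subtype.ext_iff]
  induction e with
  | _ a b =>
    obtain ⟨-, hab | hab⟩ := he
    · exact of_rel hab
    · rw [Sym2.eq_swap]
      exact of_rel hab

@[elab_as_elim]
lemma wheelEdge_induction {motive : (wheelGraph (n + 3)).edgeSet → Prop}
    (spoke : ∀ i, motive (spoke i)) (rimEdge : ∀ i, motive (rimEdge i))
    (e : (wheelGraph (n + 3)).edgeSet) : motive e := by
  obtain ⟨i, rfl⟩ | ⟨i, rfl⟩ := exists_eq_spoke_or_rimEdge e
  exacts [spoke i, rimEdge i]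

@[simp]
lemma rimVertex_mem_rimEdge {i j : ZMod (n + 3)} :
    rimVertex j ∈ (rimEdge i : Sym2 (Fin (n + 3 + 1))) ↔ j = i ∨ j = i + 1 := by
  simp [coe_rimEdge]

@[simp]
lemma rimVertex_mem_spoke {i j : ZMod (n + 3)} :
    rimVertex j ∈ (spoke i : Sym2 (Fin (n + 3 + 1))) ↔ j = i := by
  simp [coe_spoke]

@[simp]
lemma last_mem_spoke (i : ZMod (n + 3)) :
    Fin.last (n + 3) ∈ (spoke i : Sym2 (Fin (n + 3 + 1))) :=
  Sym2.mem_mk_right _ _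

@[simp]
lemma last_notMem_rimEdge (i : ZMod (n + 3)) :
    Fin.last (n + 3) ∉ (rimEdge i : Sym2 (Fin (n + 3 + 1))) := by
  simp [coe_rimEdge, (rimVertex_ne_last _).symm]

theorem isFace_of_rimWeight (c : ZMod (n + 3) → ℤ) (h : ℤ) {F : Set (wheelGraph (n + 3)).edgeSet}
    (rim_nonneg : ∀ i, 0 ≤ c i + c (i + 1)) (spoke_nonneg : ∀ i, 0 ≤ c i + h)
    (mem_rim : ∀ i, rimEdge i ∈ F ↔ c i + c (i + 1) = 0)
    (mem_spoke : ∀ i, spoke i ∈ F ↔ c i + h = 0) :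
    IsFace (AddCon.ker (multidegree (wheelGraph (n + 3)))) F := by
  let w : Fin (n + 3 + 1) → ℤ := fun a => if a = Fin.last _ then h else c (a.val : ZMod (n + 3))
  have w_rimVertex (i : ZMod (n + 3)) : w (rimVertex i) = c i :=
    (if_neg (rimVertex_ne_last i)).trans (congrArg c (ZMod.natCast_zmod_val i))
  have w_last : w (Fin.last (n + 3)) = h := if_pos rfl
  have weight_rim (i : ZMod (n + 3)) :
      Finsupp.weight w (endpointExp (rimEdge i : Sym2 (Fin (n + 3 + 1)))) = c i + c (i + 1) := by
    simp [coe_rimEdge, Finsupp.weight_single, w_rimVertex]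
  have weight_spoke (i : ZMod (n + 3)) :
      Finsupp.weight w (endpointExp (spoke i : Sym2 (Fin (n + 3 + 1)))) = c i + h := by
    simp [coe_spoke, Finsupp.weight_single, w_rimVertex, w_last]
  have hF : F = {e : (wheelGraph (n + 3)).edgeSet |
      Finsupp.weight w (endpointExp (e : Sym2 (Fin (n + 3 + 1)))) = 0} := by
    ext e
    induction e using wheelEdge_induction with
    | spoke i => rw [mem_spoke, Set.mem_ofPred_eq, weight_spoke]
    | rimEdge i => rw [mem_rim, Set.mem_ofPred_eq, weight_rim]
  rw [hF]
  refine isFace_of_vertexWeight fun e => ?_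
  induction e using wheelEdge_induction with
  | spoke i => exact weight_spoke i ▸ spoke_nonneg i
  | rimEdge i => exact weight_rim i ▸ rim_nonneg i

open Classical in
lemma isFace_of_rimEdge_notMem {F : Set (wheelGraph (n + 3)).edgeSet} (hF : ∀ i, rimEdge i ∉ F) :
    IsFace (AddCon.ker (multidegree (wheelGraph (n + 3)))) F := by
  refine isFace_of_rimWeight (fun i => if spoke i ∈ F then 1 else 2) (-1) ?_ ?_ ?_ ?_ <;>
    grind

open Classical in
lemma isFace_of_rimEdge_mem_iff {F : Set (wheelGraph (n + 3)).edgeSet} {i : ZMod (n + 3)}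
    (hrim : ∀ j, rimEdge j ∈ F ↔ j = i)
    (hspoke : ∀ k, spoke k ∈ F → k ≠ i ∧ k ≠ i + 1 ∧ k ≠ i + 2 ∧ k + 1 ≠ i)
    (hconsecutive : ∀ k, spoke k ∈ F → spoke (k + 1) ∉ F) :
    IsFace (AddCon.ker (multidegree (wheelGraph (n + 3)))) F := by
  let c (j : ZMod (n + 3)) : ℤ := if j = i ∨ j = i + 1 then 0 else if spoke j ∈ F then -1 else 2
  have c_spoke {j : ZMod (n + 3)} (hj : spoke j ∈ F) : c j = -1 := by
    have := hspoke j hj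
    simp [c, *]
  have c_eq_two {j : ZMod (n + 3)} (hj : spoke j ∉ F) (hi : j ≠ i) (hi' : j ≠ i + 1) :
      c j = 2 := by
    simp [c, hj, hi, hi']
  have c_cases (j : ZMod (n + 3)) : spoke j ∈ F ∨ (c j = 0 ∧ (j = i ∨ j = i + 1)) ∨ c j = 2 := by
    unfold c
    split_ifs <;> tauto
  have rim_eq_zero : c i + c (i + 1) = 0 := by simp [c]
  have rim_pos {j : ZMod (n + 3)} (hj : j ≠ i) : 0 < c j + c (j + 1) := by
    obtain h | ⟨h, rfl | rfl⟩ | h := c_cases j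
    · have := c_eq_two (hconsecutive j h) (hspoke j h).2.2.2 (by simpa using hj)
      rw [c_spoke h, this]
      norm_num
    · exact absurd rfl hj
    · have add_two : i + 1 + 1 = i + 2 := by ring
      have := c_eq_two (j := i + 2) (fun h' => (hspoke _ h').2.2.1 rfl)
        (by simpa using two_zmod_ne_zero) (by simpa [← add_two] using one_zmod_ne_zero)
      rw [add_two, h, this]
      norm_num
    · obtain h' | ⟨h', -⟩ | h' := c_cases (j + 1) <;> simp [h, h', c_spoke]
  refine isFace_of_rimWeight c 1 (fun j => ?_) (fun j => ?_) (fun j => ?_) (fun j => ?_)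
  · obtain rfl | hj := eq_or_ne j i
    exacts [rim_eq_zero.ge, (rim_pos hj).le]
  · obtain h | ⟨h, -⟩ | h := c_cases j <;> simp [h, c_spoke]
  · rw [hrim]
    exact ⟨fun h => h ▸ rim_eq_zero, fun h => of_not_not fun hj => (rim_pos hj).ne' h⟩
  · refine ⟨fun h => by simp [c_spoke h], fun h => ?_⟩
    obtain h' | ⟨h', -⟩ | h' := c_cases j
    exacts [h', by omega, by omega]

lemma isFace_of_alternating (h : 2 ∣ n + 3) {F : Set (wheelGraph (n + 3)).edgeSet}
    {j : ZMod (n + 3)}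
    (hrim : ∀ x, rimEdge x ∈ F ↔ ZMod.castHom h (ZMod 2) x = ZMod.castHom h (ZMod 2) j ∧ x ≠ j)
    (hspoke : ∀ i, spoke i ∉ F) :
    IsFace (AddCon.ker (multidegree (wheelGraph (n + 3)))) F := by
  let t (x : ZMod (n + 3)) : ℕ := (x - j).val
  have t_lt (x : ZMod (n + 3)) : t x < n + 3 := ZMod.val_lt _
  have t_add_one (x : ZMod (n + 3)) : t (x + 1) = if t x + 1 = n + 3 then 0 else t x + 1 := by
    simp only [t, add_sub_right_comm, val_add_one_zmod]
    split_ifs with hx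
    · rw [hx, Nat.mod_self]
    · exact Nat.mod_eq_of_lt (lt_of_le_of_ne (t_lt x) hx)
  have mem_iff (x : ZMod (n + 3)) : rimEdge x ∈ F ↔ t x % 2 = 0 ∧ t x ≠ 0 := by
    rw [hrim, ← sub_eq_zero, ← map_sub, ← ZMod.natCast_zmod_val (x - j), map_natCast,
      ZMod.natCast_eq_zero_iff, Nat.dvd_iff_mod_eq_zero, Ne, Ne, ZMod.val_eq_zero, sub_eq_zero]
  -- The weights alternate in sign and cancel on the rim edges at positive even distance from `j`.
  refine isFace_of_rimWeight (fun x => if t x = 0 then 0 else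
    if t x % 2 = 1 then n + 4 - t x else t x - (n + 3)) (n + 3) (fun x => ?_) (fun x => ?_)
    (fun x => ?_) (fun x => ?_) <;> have := t_lt x
  · simp only [t_add_one]
    split_ifs <;> first | contradiction | omega
  · split_ifs <;> omega
  · simp only [mem_iff, t_add_one]
    split_ifs <;> first | contradiction | omega
  · simp only [hspoke, false_iff]
    split_ifs <;> omega

/-- The two sides of the quadric `x_{spoke i} x_{rimEdge (i+1)} - x_{spoke (i+2)} x_{rimEdge i}` of
the toric ideal of the wheel, as sets of edges. -/
def quadricSide : Bool → ZMod (n + 3) → Finset (wheelGraph (n + 3)).edgeSet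
  | false, i => {spoke i, rimEdge (i + 1)}
  | true, i => {spoke (i + 2), rimEdge i}

/-- The edges of the side `x_{rimEdge i} x_{spoke k} x_{spoke (k+1)}` of the cubic of the toric
ideal of the wheel obtained by exchanging `i` and `k`. -/
def cubicSide (i k : ZMod (n + 3)) : Finset (wheelGraph (n + 3)).edgeSet :=
  {rimEdge i, spoke k, spoke (k + 1)}

/-- The condition on two rim edges that no edge of the rim meets both: the cubic exchanging them is
then not a consequence of the quadrics. -/
abbrev Far (i k : ZMod (n + 3)) : Prop :=
  i ≠ k ∧ i + 1 ≠ k ∧ k + 1 ≠ i ∧ i + 2 ≠ k ∧ k + 2 ≠ i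

/-- Every other edge of an even rim: those of index congruent to `a` modulo `2`. -/
def alternatingRim (h : 2 ∣ n + 3) (a : ZMod 2) : Finset (wheelGraph (n + 3)).edgeSet :=
  Finset.image rimEdge {x | ZMod.castHom h (ZMod 2) x = a}

@[simp]
lemma rimEdge_mem_quadricSide {b : Bool} {i j : ZMod (n + 3)} :
    rimEdge j ∈ quadricSide b i ↔ j = bif b then i else i + 1 := by
  cases b <;> simp [quadricSide]

@[simp]
lemma spoke_mem_quadricSide {b : Bool} {i j : ZMod (n + 3)} :
    spoke j ∈ quadricSide b i ↔ j = bif b then i + 2 else i := by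
  cases b <;> simp [quadricSide]

@[simp]
lemma rimEdge_mem_cubicSide {i j k : ZMod (n + 3)} : rimEdge j ∈ cubicSide i k ↔ j = i := by
  simp [cubicSide]

@[simp]
lemma spoke_mem_cubicSide {i j k : ZMod (n + 3)} :
    spoke j ∈ cubicSide i k ↔ j = k ∨ j = k + 1 := by
  simp [cubicSide]

@[simp]
lemma rimEdge_mem_alternatingRim {h : 2 ∣ n + 3} {a : ZMod 2} {j : ZMod (n + 3)} :
    rimEdge j ∈ alternatingRim h a ↔ ZMod.castHom h (ZMod 2) j = a := by
  rw [alternatingRim, rimEdge_injective.mem_finset_image, Finset.mem_filter_univ]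

@[simp]
lemma spoke_notMem_alternatingRim {h : 2 ∣ n + 3} {a : ZMod 2} {j : ZMod (n + 3)} :
    spoke j ∉ alternatingRim h a := by
  simp [alternatingRim]

lemma Far.symm {i k : ZMod (n + 3)} (h : Far i k) : Far k i :=
  ⟨h.1.symm, h.2.2.1, h.2.1, h.2.2.2.2, h.2.2.2.1⟩

lemma multidegree_quadricSide (i : ZMod (n + 3)) :
    multidegree (wheelGraph (n + 3)) (squarefreeExp (quadricSide false i)) =
      multidegree _ (squarefreeExp (quadricSide true i)) := by
  have add_two : i + 1 + 1 = i + 2 := by ring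
  simp only [multidegree_squarefreeExp, quadricSide]
  rw [Finset.sum_pair (spoke_ne_rimEdge _ _), Finset.sum_pair (spoke_ne_rimEdge _ _)]
  simp only [coe_spoke, coe_rimEdge, endpointExp_mk, add_two]
  abel

lemma multidegree_cubicSide (i k : ZMod (n + 3)) :
    multidegree (wheelGraph (n + 3)) (squarefreeExp (cubicSide i k)) =
      multidegree _ (squarefreeExp (cubicSide k i)) := by
  have sum_cubicSide (i k : ZMod (n + 3)) : multidegree _ (squarefreeExp (cubicSide i k)) =
      endpointExp (rimEdge i : Sym2 (Fin (n + 3 + 1))) + (endpointExp (spoke k) +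
        endpointExp (spoke (k + 1))) := by
    rw [multidegree_squarefreeExp, cubicSide, Finset.sum_insert (by simp),
      Finset.sum_pair (by simp [one_zmod_ne_zero])]
  simp only [sum_cubicSide, coe_spoke, coe_rimEdge, endpointExp_mk]
  abel

lemma multidegree_alternatingRim (h : 2 ∣ n + 3) (a : ZMod 2) :
    multidegree (wheelGraph (n + 3)) (squarefreeExp (alternatingRim h a)) =
      ∑ i, Finsupp.single (rimVertex i) 1 := by
  have shift : ∑ i with ZMod.castHom h (ZMod 2) i = a, Finsupp.single (rimVertex (i + 1)) 1 =
      ∑ i with ¬ZMod.castHom h (ZMod 2) i = a, Finsupp.single (rimVertex i) 1 := by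
    refine Finset.sum_equiv (Equiv.addRight 1) (fun i => ?_) fun i _ => rfl
    rw [Finset.mem_filter_univ, Finset.mem_filter_univ, Equiv.coe_addRight, map_add, map_one]
    have eq_iff_add_one_ne (x a : ZMod 2) : x = a ↔ x + 1 ≠ a := by decide +revert
    exact eq_iff_add_one_ne _ _
  rw [multidegree_squarefreeExp, alternatingRim, Finset.sum_image rimEdge_injective.injOn]
  simp only [coe_rimEdge, endpointExp_mk, Finset.sum_add_distrib]
  rw [shift, Finset.sum_filter_add_sum_filter_not]

theorem minimal_quadricSide (b : Bool) (i : ZMod (n + 3)) :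
    Minimal (fun F => ¬IsFace (AddCon.ker (multidegree (wheelGraph (n + 3)))) F)
      (quadricSide b i : Set (wheelGraph (n + 3)).edgeSet) := by
  refine minimal_not_isFace ?_ fun e he => ?_
  · have spoke_mem : ∀ b, spoke (bif b then i + 2 else i) ∈ quadricSide b i := by simp
    cases b
    · refine not_isFace_of_squarefreeExp (multidegree_quadricSide i) fun h => ?_
      simpa [two_zmod_ne_zero] using h (spoke_mem true)
    · refine not_isFace_of_squarefreeExp (multidegree_quadricSide i).symm fun h => ?_
      simpa [two_zmod_ne_zero] using h (spoke_mem false)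
  · induction e using wheelEdge_induction with
    | spoke j =>
      refine isFace_of_rimEdge_mem_iff (i := bif b then i else i + 1) ?_ ?_ ?_ <;>
        simp_all
    | rimEdge j =>
      refine isFace_of_rimEdge_notMem ?_
      simp_all

theorem minimal_cubicSide {i k : ZMod (n + 3)} (hik : Far i k) :
    Minimal (fun F => ¬IsFace (AddCon.ker (multidegree (wheelGraph (n + 3)))) F)
      (cubicSide i k : Set (wheelGraph (n + 3)).edgeSet) := by
  refine minimal_not_isFace ?_ fun e he => ?_
  · refine not_isFace_of_squarefreeExp (multidegree_cubicSide i k) fun h => hik.1.symm ?_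
    have rim_mem : rimEdge k ∈ cubicSide k i := by simp
    simpa using h rim_mem
  · induction e using wheelEdge_induction with
    | spoke j =>
      have spoke_mem {l : ZMod (n + 3)} : spoke l ∈ (cubicSide i k : Set _) \ {spoke j} ↔
          (l = k ∨ l = k + 1) ∧ l ≠ j := by simp
      refine isFace_of_rimEdge_mem_iff (i := i) (by simp) (fun l hl => ?_) fun l hl hl' => ?_
      · obtain ⟨rfl | rfl, -⟩ := spoke_mem.1 hl <;> grind
      · rw [spoke_mem] at hl hl'
        rw [Finset.mem_coe, spoke_mem_cubicSide] at he
        grind [one_zmod_ne_zero (n := n), two_zmod_ne_zero (n := n)]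
    | rimEdge j =>
      refine isFace_of_rimEdge_notMem ?_
      simp_all

theorem minimal_alternatingRim (h : 2 ∣ n + 3) (a : ZMod 2) :
    Minimal (fun F => ¬IsFace (AddCon.ker (multidegree (wheelGraph (n + 3)))) F)
      (alternatingRim h a : Set (wheelGraph (n + 3)).edgeSet) := by
  refine minimal_not_isFace ?_ fun e he => ?_
  · refine not_isFace_of_squarefreeExp (t := alternatingRim h (a + 1)) ?_ fun hsub => ?_
    · rw [AddCon.ker_rel, multidegree_alternatingRim, multidegree_alternatingRim]
    · obtain ⟨j, hj⟩ := ZMod.castHom_surjective h (a + 1)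
      have := rimEdge_mem_alternatingRim.1 (hsub (rimEdge_mem_alternatingRim.2 hj))
      rw [hj] at this
      simp at this
  · induction e using wheelEdge_induction with
    | spoke j => simp at he
    | rimEdge j =>
      refine isFace_of_alternating h (j := j) ?_ ?_ <;> simp_all

section Separation

variable {c : AddCon ((wheelGraph (n + 3)).edgeSet →₀ ℕ)}
  {u v : (wheelGraph (n + 3)).edgeSet →₀ ℕ}

lemma exists_ne_zero_at_rimVertex (huv : multidegree _ u = multidegree _ v)
    {e : (wheelGraph (n + 3)).edgeSet} (he : u e ≠ 0) {i : ZMod (n + 3)}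
    (hi : rimVertex i ∈ (e : Sym2 (Fin (n + 3 + 1)))) :
    v (spoke i) ≠ 0 ∨ v (rimEdge i) ≠ 0 ∨ v (rimEdge (i - 1)) ≠ 0 := by
  obtain ⟨e', he', hi'⟩ := exists_mem_edge_of_multidegree_eq huv he hi
  induction e' using wheelEdge_induction with
  | spoke j =>
    obtain rfl := rimVertex_mem_spoke.1 hi'
    exact .inl he'
  | rimEdge j =>
    obtain rfl | rfl := rimVertex_mem_rimEdge.1 hi'
    · exact .inr (.inl he')
    · exact .inr (.inr (by rwa [add_sub_cancel_right]))

lemma exists_spoke_ne_zero (huv : multidegree _ u = multidegree _ v) {i : ZMod (n + 3)}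
    (hi : u (spoke i) ≠ 0) : ∃ j, v (spoke j) ≠ 0 := by
  obtain ⟨e, he, hlast⟩ := exists_mem_edge_of_multidegree_eq huv hi (last_mem_spoke i)
  induction e using wheelEdge_induction with
  | spoke j => exact ⟨j, he⟩
  | rimEdge j => exact absurd hlast (last_notMem_rimEdge j)

variable (hsep : Separated c u v) (huv : multidegree _ u = multidegree _ v)
  (hquadric : ∀ i, c (squarefreeExp (quadricSide false i)) (squarefreeExp (quadricSide true i)))

include hsep hquadric

lemma Separated.eq_zero_of_quadricSide_false {i : ZMod (n + 3)} (hs : u (spoke i) ≠ 0)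
    (hr : u (rimEdge (i + 1)) ≠ 0) {e : (wheelGraph (n + 3)).edgeSet}
    (he : e ∈ quadricSide true i) : v e = 0 :=
  hsep.eq_zero_of_con (hquadric i) (by simp [quadricSide, Finset.insert_subset_iff, hs, hr]) he

lemma Separated.eq_zero_of_quadricSide_true {i : ZMod (n + 3)} (hs : u (spoke (i + 2)) ≠ 0)
    (hr : u (rimEdge i) ≠ 0) {e : (wheelGraph (n + 3)).edgeSet}
    (he : e ∈ quadricSide false i) : v e = 0 :=
  hsep.eq_zero_of_con (c.symm (hquadric i))
    (by simp [quadricSide, Finset.insert_subset_iff, hs, hr]) he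

include huv

lemma Separated.spoke_add_one_ne_zero {i : ZMod (n + 3)} (hs : u (spoke i) ≠ 0)
    (hr : v (rimEdge i) ≠ 0) : u (spoke (i + 1)) ≠ 0 := by
  obtain h | h | h := exists_ne_zero_at_rimVertex huv.symm (i := i + 1) hr (by simp)
  · exact h
  · exact absurd (hsep.eq_zero_of_quadricSide_false hquadric hs h (by simp)) hr
  · rw [add_sub_cancel_right] at h
    exact absurd (hsep.eq_zero h) hr

lemma Separated.spoke_ne_zero_of_add_one {i : ZMod (n + 3)} (hs : u (spoke (i + 1)) ≠ 0)
    (hr : v (rimEdge i) ≠ 0) : u (spoke i) ≠ 0 := by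
  obtain h | h | h := exists_ne_zero_at_rimVertex huv.symm (i := i) hr (by simp)
  · exact h
  · exact absurd (hsep.eq_zero h) hr
  · have sub_add : i - 1 + 2 = i + 1 := by ring
    exact absurd (hsep.eq_zero_of_quadricSide_true hquadric (sub_add ▸ hs) h (by simp)) hr

lemma Separated.exists_triangle {i : ZMod (n + 3)} (hi : u (spoke i) ≠ 0) :
    ∃ k, u (spoke k) ≠ 0 ∧ u (spoke (k + 1)) ≠ 0 ∧ v (rimEdge k) ≠ 0 := by
  obtain h | h | h := exists_ne_zero_at_rimVertex huv hi (rimVertex_mem_spoke.2 rfl)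
  · exact absurd (hsep.eq_zero hi) h
  · exact ⟨i, hi, hsep.spoke_add_one_ne_zero huv hquadric hi h, h⟩
  · rw [← sub_add_cancel i 1] at hi
    exact ⟨i - 1, hsep.spoke_ne_zero_of_add_one huv hquadric hi h, hi, h⟩

variable
  (hcubic : ∀ i k, Far i k → c (squarefreeExp (cubicSide i k)) (squarefreeExp (cubicSide k i)))

include hcubic

theorem Separated.spoke_eq_zero (i : ZMod (n + 3)) : u (spoke i) = 0 := by
  by_contra hi
  obtain ⟨j, hj⟩ := exists_spoke_ne_zero huv hi
  obtain ⟨k, hk, hk', hrk⟩ := hsep.exists_triangle huv hquadric hi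
  obtain ⟨l, hl, hl', hrl⟩ := hsep.symm.exists_triangle huv.symm hquadric hj
  have ne_of_ne_zero {a b : ZMod (n + 3)} (ha : u (spoke a) ≠ 0) (hb : v (spoke b) ≠ 0) :
      a ≠ b := by
    rintro rfl
    exact hb (hsep.eq_zero ha)
  have l_add_two_ne : l + 2 ≠ k := by
    rintro rfl
    exact hl (hsep.eq_zero_of_quadricSide_true hquadric hk hrl (by simp))
  have k_add_two_ne : k + 2 ≠ l := by
    rintro rfl
    have add_two : k + 1 + 1 = k + 2 := by ring
    have add_three : k + 2 + 1 = k + 1 + 2 := by ring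
    exact hl' (hsep.eq_zero_of_quadricSide_false hquadric hk' (add_two ▸ hrl) (by simp [add_three]))
  have far : Far l k := ⟨(ne_of_ne_zero hk hl).symm, (ne_of_ne_zero hk hl').symm,
    ne_of_ne_zero hk' hl, l_add_two_ne, k_add_two_ne⟩
  refine hrk (hsep.eq_zero_of_con (hcubic l k far) (fun e => ?_) (e := rimEdge k) (by simp))
  simp only [cubicSide, Finset.mem_insert, Finset.mem_singleton, Finsupp.mem_support_iff]
  rintro (rfl | rfl | rfl) <;> assumption

end Separation

section SeparatedRim

variable {c : AddCon ((wheelGraph (n + 3)).edgeSet →₀ ℕ)}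
  {u v : (wheelGraph (n + 3)).edgeSet →₀ ℕ}

lemma Separated.rimEdge_add_one_ne_zero (hsep : Separated c u v)
    (huv : multidegree _ u = multidegree _ v) (hv : ∀ i, v (spoke i) = 0) {i : ZMod (n + 3)}
    (hi : u (rimEdge i) ≠ 0) : v (rimEdge (i + 1)) ≠ 0 := by
  obtain h | h | h := exists_ne_zero_at_rimVertex huv (i := i + 1) hi (by simp)
  · exact absurd (hv _) h
  · exact h
  · rw [add_sub_cancel_right] at h
    exact absurd (hsep.eq_zero hi) h

variable (hsep : Separated c u v) (huv : multidegree _ u = multidegree _ v)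
  (hu : ∀ i, u (spoke i) = 0) (hv : ∀ i, v (spoke i) = 0)

include hsep huv hu hv

lemma Separated.rimEdge_add_two_mul_ne_zero {i : ZMod (n + 3)} (hi : u (rimEdge i) ≠ 0) (m : ℕ) :
    u (rimEdge (i + 2 * m)) ≠ 0 := by
  induction m with
  | zero => simpa using hi
  | succ m ih =>
    have := hsep.symm.rimEdge_add_one_ne_zero huv.symm hu
      (hsep.rimEdge_add_one_ne_zero huv hv ih)
    convert this using 3
    push_cast
    ring

theorem Separated.rimEdge_eq_zero (hrim : ∀ h : 2 ∣ n + 3,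
      c (squarefreeExp (alternatingRim h 0)) (squarefreeExp (alternatingRim h 1)))
    (i : ZMod (n + 3)) : u (rimEdge i) = 0 := by
  by_contra hi
  have even_steps := hsep.rimEdge_add_two_mul_ne_zero huv hu hv hi
  have hi' := hsep.rimEdge_add_one_ne_zero huv hv hi
  obtain ⟨m, hm⟩ | ⟨m, hm⟩ := Nat.even_or_odd (n + 3)
  · have h : 2 ∣ n + 3 := ⟨m, by omega⟩
    have rel (a : ZMod 2) :
        c (squarefreeExp (alternatingRim h a)) (squarefreeExp (alternatingRim h (a + 1))) := by
      obtain rfl | rfl : a = 0 ∨ a = 1 := by decide +revert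
      exacts [hrim h, c.symm (hrim h)]
    refine hi' (hsep.eq_zero_of_con (rel (ZMod.castHom h _ i)) (fun e => ?_)
      (rimEdge_mem_alternatingRim.2 (by rw [map_add, map_one])))
    induction e using wheelEdge_induction with
    | spoke j => simp
    | rimEdge j =>
      intro hj
      rw [rimEdge_mem_alternatingRim, ← sub_eq_zero, ← map_sub, ← ZMod.natCast_zmod_val (j - i),
        map_natCast, ZMod.natCast_eq_zero_iff] at hj
      obtain ⟨k, hk⟩ := hj
      have shift : i + 2 * (k : ZMod (n + 3)) = j := by
        have := ZMod.natCast_zmod_val (j - i)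
        rw [hk, Nat.cast_mul, Nat.cast_ofNat] at this
        rw [this, add_sub_cancel]
      exact Finsupp.mem_support_iff.2 (shift ▸ even_steps k)
  · have wrap : i + 2 * m + 1 = i := by
      have : ((2 * m + 1 : ℕ) : ZMod (n + 3)) = 0 := by rw [← hm, ZMod.natCast_self]
      push_cast at this
      rw [add_assoc, this, add_zero]
    have := hsep.rimEdge_add_one_ne_zero huv hv (even_steps m)
    rw [wrap] at this
    exact this (hsep.eq_zero hi)

end SeparatedRim

theorem ker_multidegree_le_of_relations {c : AddCon ((wheelGraph (n + 3)).edgeSet →₀ ℕ)}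
    (hc : c ≤ AddCon.ker (multidegree (wheelGraph (n + 3))))
    (hquadric : ∀ i, c (squarefreeExp (quadricSide false i)) (squarefreeExp (quadricSide true i)))
    (hcubic : ∀ i k, Far i k → c (squarefreeExp (cubicSide i k)) (squarefreeExp (cubicSide k i)))
    (hrim : ∀ h : 2 ∣ n + 3,
      c (squarefreeExp (alternatingRim h 0)) (squarefreeExp (alternatingRim h 1))) :
    AddCon.ker (multidegree (wheelGraph (n + 3))) ≤ c := by
  refine ker_le_of_forall_separated (fun _ _ => degree_eq_of_multidegree_eq) hc
    fun u v huv hsep => ?_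
  have hu := hsep.spoke_eq_zero huv hquadric hcubic
  have hv := hsep.symm.spoke_eq_zero huv.symm hquadric hcubic
  ext e
  induction e using wheelEdge_induction with
  | spoke i => exact hu i
  | rimEdge i => exact hsep.rimEdge_eq_zero huv hu hv hrim i

lemma quadricSide_inj (hn : n ≠ 0) {b b' : Bool} {i i' : ZMod (n + 3)} :
    quadricSide b i = quadricSide b' i' ↔ b = b' ∧ i = i' := by
  refine ⟨fun h => ?_, by rintro ⟨rfl, rfl⟩; rfl⟩
  have hrim := rimEdge_mem_quadricSide.1 (h ▸ rimEdge_mem_quadricSide.2 rfl)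
  have hspoke := spoke_mem_quadricSide.1 (h ▸ spoke_mem_quadricSide.2 rfl)
  cases b <;> cases b' <;> simp only [cond_true, cond_false] at hrim hspoke <;>
    grind [three_zmod_ne_zero hn]

lemma cubicSide_inj {i k i' k' : ZMod (n + 3)} :
    cubicSide i k = cubicSide i' k' ↔ i = i' ∧ k = k' := by
  refine ⟨fun h => ?_, by rintro ⟨rfl, rfl⟩; rfl⟩
  have hrim := rimEdge_mem_cubicSide.1 (h ▸ rimEdge_mem_cubicSide.2 rfl)
  have hspoke := spoke_mem_cubicSide.1 (h ▸ spoke_mem_cubicSide.2 (.inl rfl))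
  have hspoke' := spoke_mem_cubicSide.1 (h ▸ spoke_mem_cubicSide.2 (.inr rfl))
  grind [two_zmod_ne_zero (n := n)]

lemma alternatingRim_injective (h : 2 ∣ n + 3) : Function.Injective (alternatingRim h) := by
  intro a a' ha
  obtain ⟨j, hj⟩ := ZMod.castHom_surjective h a
  rw [← hj, ← rimEdge_mem_alternatingRim (h := h), ← ha, rimEdge_mem_alternatingRim, hj]

lemma quadricSide_ne_cubicSide (b : Bool) (i j k : ZMod (n + 3)) :
    quadricSide b i ≠ cubicSide j k := by
  intro h
  have hk : spoke k ∈ quadricSide b i := h ▸ spoke_mem_cubicSide.2 (.inl rfl)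
  have hk' : spoke (k + 1) ∈ quadricSide b i := h ▸ spoke_mem_cubicSide.2 (.inr rfl)
  rw [spoke_mem_quadricSide] at hk hk'
  exact one_zmod_ne_zero (add_eq_left.1 (hk'.trans hk.symm))

lemma quadricSide_ne_alternatingRim (b : Bool) (i : ZMod (n + 3)) (h : 2 ∣ n + 3) (a : ZMod 2) :
    quadricSide b i ≠ alternatingRim h a := fun heq =>
  spoke_notMem_alternatingRim (heq ▸ spoke_mem_quadricSide.2 rfl)

lemma cubicSide_ne_alternatingRim (i k : ZMod (n + 3)) (h : 2 ∣ n + 3) (a : ZMod 2) :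
    cubicSide i k ≠ alternatingRim h a := fun heq =>
  spoke_notMem_alternatingRim (heq ▸ spoke_mem_cubicSide.2 (.inl rfl))

/-- The indices of a minimal system of binomial generators of the toric ideal of the wheel with
more than three spokes: a quadric for each rim edge, a cubic for each unordered pair of far rim
edges (listed in increasing order), and, if the rim is even, the binomial of the rim. -/
abbrev WheelIndex (n : ℕ) : Type :=
  ZMod (n + 3) ⊕ {p : ZMod (n + 3) × ZMod (n + 3) // p.1.val < p.2.val ∧ Far p.1 p.2} ⊕
    PLift (2 ∣ n + 3)

/-- The two sides of the binomial generators of the toric ideal of the wheel, as sets of edges. -/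
def wheelSide : WheelIndex n → Bool → Finset (wheelGraph (n + 3)).edgeSet
  | .inl i, b => quadricSide b i
  | .inr (.inl p), b => bif b then cubicSide p.1.2 p.1.1 else cubicSide p.1.1 p.1.2
  | .inr (.inr h), b => alternatingRim h.down (bif b then 1 else 0)

lemma multidegree_wheelSide (x : WheelIndex n) :
    multidegree (wheelGraph (n + 3)) (squarefreeExp (wheelSide x false)) =
      multidegree _ (squarefreeExp (wheelSide x true)) := by
  obtain i | p | h := x
  · exact multidegree_quadricSide i
  · exact multidegree_cubicSide _ _
  · exact (multidegree_alternatingRim _ _).trans (multidegree_alternatingRim _ _).symm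

lemma minimal_wheelSide (x : WheelIndex n) (b : Bool) :
    Minimal (fun F => ¬IsFace (AddCon.ker (multidegree (wheelGraph (n + 3)))) F)
      (wheelSide x b : Set (wheelGraph (n + 3)).edgeSet) := by
  obtain i | ⟨p, -, hp⟩ | h := x
  · exact minimal_quadricSide b i
  · cases b
    exacts [minimal_cubicSide hp, minimal_cubicSide hp.symm]
  · exact minimal_alternatingRim _ _

lemma wheelSide_injective (hn : n ≠ 0) :
    Function.Injective fun p : WheelIndex n × Bool => wheelSide p.1 p.2 := by
  rintro ⟨i | ⟨⟨i, k⟩, hik, _⟩ | h, b⟩ ⟨i' | ⟨⟨i', k'⟩, hik', _⟩ | h', b'⟩ heq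
  · obtain ⟨rfl, rfl⟩ := (quadricSide_inj hn).1 heq
    rfl
  · cases b' <;> exact absurd heq (quadricSide_ne_cubicSide _ _ _ _)
  · exact absurd heq (quadricSide_ne_alternatingRim _ _ _ _)
  · cases b <;> exact absurd heq.symm (quadricSide_ne_cubicSide _ _ _ _)
  · cases b <;> cases b' <;> obtain ⟨rfl, rfl⟩ := cubicSide_inj.1 heq
    exacts [rfl, absurd hik hik'.asymm, absurd hik hik'.asymm, rfl]
  · cases b <;> exact absurd heq (cubicSide_ne_alternatingRim _ _ _ _)
  · exact absurd heq.symm (quadricSide_ne_alternatingRim _ _ _ _)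
  · cases b' <;> exact absurd heq.symm (cubicSide_ne_alternatingRim _ _ _ _)
  · have := alternatingRim_injective h.down heq
    obtain rfl : b = b' := by cases b <;> cases b' <;> simp_all
    rw [Subsingleton.elim h h']

theorem span_wheelSide (K : Type*) [Field K] (n : ℕ) :
    Ideal.span (Set.range fun x : WheelIndex n =>
      monomial (squarefreeExp (wheelSide x false)) (1 : K) -
        monomial (squarefreeExp (wheelSide x true)) 1) =
      toricIdealGraph K (wheelGraph (n + 3)) := by
  refine span_eq_toricIdealGraph K multidegree_wheelSide fun c hc rel =>
    ker_multidegree_le_of_relations hc (fun i => rel (.inl i)) (fun i k hik => ?_)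
      fun h => rel (.inr (.inr ⟨h⟩))
  obtain h | h | h := lt_trichotomy i.val k.val
  · exact rel (.inr (.inl ⟨(i, k), h, hik⟩))
  · exact absurd (ZMod.val_injective _ h) hik.1
  · exact c.symm (rel (.inr (.inl ⟨(k, i), h, hik.symm⟩)))

theorem barI_wheelGraph_add_three_eq_muI (K : Type*) [Field K] (hn : n ≠ 0) :
    barI (toricIdealGraph K (wheelGraph (n + 3))) =
      muI (toricIdealGraph K (wheelGraph (n + 3))) := by
  classical
  refine barI_eq_muI_of_card_le (fun _ => ⟨_, _, rfl⟩) (span_wheelSide K n)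
    (E := fun p : WheelIndex n × Bool => wheelSide p.1 p.2)
    (Finset.coe_injective.comp (wheelSide_injective hn)) (fun p => ?_) ?_
  · rw [monomialCon_toricIdealGraph]
    exact minimal_wheelSide p.1 p.2
  · rw [Fintype.card_prod, Fintype.card_bool]
    omega

theorem span_quadricSide_wheelGraph_three (K : Type*) [Field K] :
    Ideal.span (Set.range fun i : Fin 2 =>
      monomial (squarefreeExp (quadricSide (n := 0) false i.val)) (1 : K) -
        monomial (squarefreeExp (quadricSide true i.val)) 1) =
      toricIdealGraph K (wheelGraph 3) := by
  refine span_eq_toricIdealGraph K (fun i => multidegree_quadricSide _) fun c hc rel =>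
    ker_multidegree_le_of_relations hc (fun i => ?_) (fun i k hik => ?_) fun h => ?_
  · have quadricSide_true (i : ZMod 3) :
        quadricSide (n := 0) true i = quadricSide false (i + 2) := by
      have add_two_add_one : i + 2 + 1 = i := by decide +revert
      rw [quadricSide, quadricSide, add_two_add_one]
    have rel_zero : c _ (squarefreeExp (quadricSide true 0)) := rel 0
    have rel_one : c _ (squarefreeExp (quadricSide true 1)) := rel 1
    rw [quadricSide_true] at rel_zero rel_one ⊢
    obtain rfl | rfl | rfl : i = 0 ∨ i = 1 ∨ i = 2 := by decide +revert
    exacts [rel_zero, rel_one, c.trans (c.symm rel_zero) (c.symm rel_one)]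
  · exact absurd hik (by decide +revert)
  · omega

theorem barI_wheelGraph_three_eq_muI (K : Type*) [Field K] :
    barI (toricIdealGraph K (wheelGraph 3)) = muI (toricIdealGraph K (wheelGraph 3)) := by
  refine barI_eq_muI_of_card_le (fun _ => ⟨_, _, rfl⟩) (span_quadricSide_wheelGraph_three K)
    (E := fun i : ZMod 3 => quadricSide (n := 0) false i)
    (fun i j h => ?_) (fun i => ?_) (by decide)
  · exact spoke_mem_quadricSide.1 (Finset.coe_injective h ▸ spoke_mem_quadricSide.2 rfl)
  · rw [monomialCon_toricIdealGraph]
    exact minimal_quadricSide _ i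

end Wheel

theorem stmt6 (K : Type*) [Field K] (n : ℕ) (hn : 3 ≤ n) :
    barI (toricIdealGraph K (wheelGraph n)) = muI (toricIdealGraph K (wheelGraph n)) := by
  obtain ⟨m, rfl⟩ := Nat.exists_eq_add_of_le' hn
  obtain rfl | hm := eq_or_ne m 0
  · exact barI_wheelGraph_three_eq_muI K
  · exact barI_wheelGraph_add_three_eq_muI K hm
end
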